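/- arXiv:2204.03553 — 2 statements merged into one kernel-verified Lean document; each statement's English description precedes it below -/
import Mathlib

section
/- Let X, Y ⊆ ω. There exists an embedding of pcas of B^X into K1^Y if and only if the double Turing jump X'' is Turing reducible to Y. In particular, for every X there is an embedding B^X ↪ K1^{X''}, and conversely any embedding B^X ↪ K1^Y implies X'' ≤_T Y. -/
namespace PCAEmb

/-! ### Oracle computability -/

/-- Codes for partial functions computable relative to an oracle. -/
inductive OCode : Type
  | zero : OCode
  | succ : OCode
  | left : OCode
  | right : OCode
  | oracle : OCode
  | pair : OCode → OCode → OCode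
  | comp : OCode → OCode → OCode
  | prec : OCode → OCode → OCode
  | rfind' : OCode → OCode

/-- Evaluation of an oracle code, relative to a (partial) oracle `O`. -/
def evalo (O : ℕ →. ℕ) : OCode → ℕ →. ℕ
  | .zero => pure 0
  | .succ => Nat.succ
  | .left => ↑fun n : ℕ => n.unpair.1
  | .right => ↑fun n : ℕ => n.unpair.2
  | .oracle => O
  | .pair cf cg => fun n => Nat.pair <$> evalo O cf n <*> evalo O cg n
  | .comp cf cg => fun n => evalo O cg n >>= evalo O cf
  | .prec cf cg =>
      Nat.unpaired fun a n =>
        n.rec (evalo O cf a) fun y IH => do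
          let i ← IH
          evalo O cg (Nat.pair a (Nat.pair y i))
  | .rfind' cf =>
      Nat.unpaired fun a m =>
        (Nat.rfind fun n => (fun x => x = 0) <$> evalo O cf (Nat.pair a (n + m))).map (· + m)

/-- The standard numbering of oracle codes. -/
def OCode.ofNat : ℕ → OCode
  | 0 => .zero
  | 1 => .succ
  | 2 => .left
  | 3 => .right
  | 4 => .oracle
  | n + 5 =>
    match n % 4 with
    | 0 => .pair (OCode.ofNat (n / 4).unpair.1) (OCode.ofNat (n / 4).unpair.2)
    | 1 => .comp (OCode.ofNat (n / 4).unpair.1) (OCode.ofNat (n / 4).unpair.2)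
    | 2 => .prec (OCode.ofNat (n / 4).unpair.1) (OCode.ofNat (n / 4).unpair.2)
    | _ => .rfind' (OCode.ofNat (n / 4).unpair.1)
  decreasing_by
    all_goals
      have h1 := Nat.unpair_left_le (n / 4)
      have h2 := Nat.unpair_right_le (n / 4)
      have h3 := Nat.div_le_self n 4
      omega

/-- The `e`-th Turing functional with oracle `O` : `Φ_e^O`. -/
def phi (O : ℕ →. ℕ) (e : ℕ) : ℕ →. ℕ := evalo O (OCode.ofNat e)

/-- The characteristic function of a set of naturals, as a (total) partial function. -/
noncomputable def chi (X : Set ℕ) : ℕ →. ℕ :=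
  fun n => Part.some (X.indicator (fun _ => 1) n)

/-- `ψ` is partial computable relative to the oracle `O`. -/
def RecursiveIn (O : ℕ →. ℕ) (ψ : ℕ →. ℕ) : Prop := ∃ c : OCode, evalo O c = ψ

/-- Turing reducibility of sets of naturals. -/
def TuringLE (X Y : Set ℕ) : Prop := RecursiveIn (chi Y) (chi X)

/-- A total function `d : ℕ → ℕ` is `Y`-computable. -/
def ComputableIn (Y : Set ℕ) (d : ℕ → ℕ) : Prop :=
  RecursiveIn (chi Y) (fun n => Part.some (d n))

/-- A binary relation on `ℕ` is `Y`-c.e. -/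
def CEIn (Y : Set ℕ) (R : ℕ → ℕ → Prop) : Prop :=
  ∃ c : OCode, ∀ n m, R n m ↔ (evalo (chi Y) c (Nat.pair n m)).Dom

/-- A set `W ⊆ ℕ` is `Y`-c.e. -/
def CE1In (Y : Set ℕ) (W : Set ℕ) : Prop :=
  ∃ c : OCode, ∀ n, n ∈ W ↔ (evalo (chi Y) c n).Dom

/-- The canonical finite set `D_u` with code `u` (binary coding). -/
def Du (u : ℕ) : Set ℕ := {k | u.testBit k}

/-- Enumeration reducibility: `Z ≤ₑ Y`. -/
def EnumLE (Z Y : Set ℕ) : Prop :=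
  ∃ W : Set ℕ, CE1In ∅ W ∧ ∀ x, x ∈ Z ↔ ∃ u, Nat.pair x u ∈ W ∧ Du u ⊆ Y

/-- The Turing jump `X'` of a set `X`. -/
def jump (X : Set ℕ) : Set ℕ := {e | (phi (chi X) e e).Dom}

/-- The halting set `K = {e : φ_e(e)↓}`. -/
def Khalt : Set ℕ := jump ∅

/-! ### Partial combinatory algebras -/

/-- `k·a·b` as a partial element. -/
def app2 {α : Type*} (app : α → α → Part α) (a b c : α) : Part α :=
  (app a b).bind fun x => app x c

/-- `s·a·b·c` as a partial element. -/
def app3 {α : Type*} (app : α → α → Part α) (a b c d : α) : Part α :=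
  (app2 app a b c).bind fun x => app x d

/-- A partial applicative structure is a pca if it has (distinct) combinators `s` and `k`. -/
def IsPCA {α : Type*} (app : α → α → Part α) : Prop :=
  ∃ s k : α, s ≠ k ∧
    (∀ a b : α, app2 app k a b = Part.some a) ∧
    (∀ a b : α, (app2 app s a b).Dom) ∧
    (∀ a b c : α,
      app3 app s a b c = (app a c).bind fun x => (app b c).bind fun y => app x y)

/-- An embedding of partial combinatory algebras: an injection that preserves
(defined) application. -/
def IsPCAEmbedding {α β : Type*} (appA : α → α → Part α) (appB : β → β → Part β)
    (f : α → β) : Prop :=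
  Function.Injective f ∧ ∀ a a' c : α, c ∈ appA a a' → f c ∈ appB (f a) (f a')

/-! ### Partial numberings -/

/-- `γ : ℕ ⇀ α` is a partial numbering (i.e. surjective). -/
def IsNumbering {α : Type*} (γ : ℕ →. α) : Prop := ∀ a : α, ∃ n, a ∈ γ n

/-- `d` is an `(a⊥, a⊤)`-decider for `X` with respect to `γ`. -/
def IsDecider {α : Type*} (γ : ℕ →. α) (abot atop : α) (X : Set ℕ) (d : ℕ → ℕ) : Prop :=
  ∀ n, (n ∉ X → γ (d n) = Part.some abot) ∧ (n ∈ X → γ (d n) = Part.some atop)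

/-- `γ` has `Y`-c.e. inequivalence. -/
def CEInequiv {α : Type*} (Y : Set ℕ) (γ : ℕ →. α) : Prop :=
  ∃ R : ℕ → ℕ → Prop, CEIn Y R ∧
    ∀ n m, (γ n).Dom → (γ m).Dom → (R n m ↔ γ n ≠ γ m)

/-- `γ` is a `Y`-effectively pca-valued partial numbering: the application is
represented on codes by a partial `Y`-computable function `ψ`. -/
def EffValued {α : Type*} (Y : Set ℕ) (app : α → α → Part α) (γ : ℕ →. α) : Prop :=
  ∃ ψ : ℕ →. ℕ, RecursiveIn (chi Y) ψ ∧
    ∀ (n m : ℕ) (a b c : α), a ∈ γ n → b ∈ γ m → c ∈ app a b →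
      ∃ j, j ∈ ψ (Nat.pair n m) ∧ c ∈ γ j

/-- `γ` is a strongly `Y`-effectively pca-valued partial numbering. -/
def StrongEffValued {α : Type*} (Y : Set ℕ) (app : α → α → Part α) (γ : ℕ →. α) : Prop :=
  ∃ ψ : ℕ →. ℕ, RecursiveIn (chi Y) ψ ∧
    (∀ (n m : ℕ) (a b c : α), a ∈ γ n → b ∈ γ m → c ∈ app a b →
      ∃ j, j ∈ ψ (Nat.pair n m) ∧ c ∈ γ j) ∧
    (∀ (n m k l : ℕ) (a b a' b' c : α), a ∈ γ n → b ∈ γ m → a' ∈ γ k → b' ∈ γ l →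
      c ∈ app a b → c ∈ app a' b' → ψ (Nat.pair n m) = ψ (Nat.pair k l))

/-! ### The models -/

/-- Kleene's first model relativized to `X`: application `n · m = Φ_n^X(m)`. -/
noncomputable def k1App (X : Set ℕ) : ℕ → ℕ → Part ℕ := fun n m => phi (chi X) n m

/-- A total function as a partial function. -/
def toPFun (g : ℕ → ℕ) : ℕ →. ℕ := fun n => Part.some (g n)

/-- Join `f ⊕ g` of two partial functions. -/
def pjoin (f g : ℕ →. ℕ) : ℕ →. ℕ := fun n =>
  if n % 2 = 0 then f (n / 2) else g (n / 2)

/-- The totalization of a partial function, as a partial element of `ℕ → ℕ`: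
defined iff `ψ` is total. -/
def partToTotal (ψ : ℕ →. ℕ) : Part (ℕ → ℕ) :=
  ⟨∀ n, (ψ n).Dom, fun H n => (ψ n).get (H n)⟩

/-- Application in Kleene's second model `K₂`: `g · h = Φ^{g⊕h}_{g 0}`,
defined iff this function is total. -/
def k2App (g h : ℕ → ℕ) : Part (ℕ → ℕ) :=
  partToTotal (phi (pjoin (toPFun g) (toPFun h)) (g 0))

/-- Application in van Oosten's sequential model `B`: `θ · ρ = Φ^{θ⊕ρ}_{θ 0}`
(always defined, as a partial function). -/
def bApp (θ ρ : ℕ →. ℕ) : Part (ℕ →. ℕ) :=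
  Part.some (fun n => (θ 0).bind fun e => phi (pjoin θ ρ) e n)

/-- Restriction of a partial applicative structure to a subset. -/
def subApp {α : Type*} (app : α → α → Part α) (P : α → Prop)
    (a b : Subtype P) : Part (Subtype P) :=
  (app a.1 b.1).bind fun c => Part.assert (P c) fun h => Part.some ⟨c, h⟩

/-- Carrier of `K₂^X` : the total `X`-computable functions. -/
def K2el (X : Set ℕ) : Type := {g : ℕ → ℕ // RecursiveIn (chi X) (toPFun g)}

/-- Application in `K₂^X`. -/
def k2XApp (X : Set ℕ) : K2el X → K2el X → Part (K2el X) :=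
  subApp k2App _

/-- Carrier of `B^X` : the partial `X`-computable functions. -/
def Bel (X : Set ℕ) : Type := {θ : ℕ →. ℕ // RecursiveIn (chi X) θ}

/-- Application in `B^X`. -/
def bXApp (X : Set ℕ) : Bel X → Bel X → Part (Bel X) :=
  subApp bApp _

/-- Application in Scott's graph model `G`. -/
def gApp (A B : Set ℕ) : Part (Set ℕ) :=
  Part.some {n | ∃ u, Nat.pair n u ∈ A ∧ Du u ⊆ B}

/-- Carrier of `G^Z` : the sets enumeration-reducible to `Z`. -/
def Gel (Z : Set ℕ) : Type := {A : Set ℕ // EnumLE A Z}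

/-- Application in `G^Z`. -/
def gXApp (Z : Set ℕ) : Gel Z → Gel Z → Part (Gel Z) :=
  subApp gApp _

/-- `X ⊕ X̄ = {2n : n ∈ X} ∪ {2n+1 : n ∉ X}`. -/
def joinCompl (X : Set ℕ) : Set ℕ :=
  {k | ∃ n, (k = 2 * n ∧ n ∈ X) ∨ (k = 2 * n + 1 ∧ n ∉ X)}

/-! ### The λ-calculus -/

/-- Untyped λ-terms (de Bruijn representation). -/
inductive Lam : Type
  | var : ℕ → Lam
  | app : Lam → Lam → Lam
  | abs : Lam → Lam

/-- Lift (shift up) the free variables `≥ d` of a term. -/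
def Lam.lift : Lam → ℕ → Lam
  | .var n, d => if n < d then .var n else .var (n + 1)
  | .app M N, d => .app (M.lift d) (N.lift d)
  | .abs M, d => .abs (M.lift (d + 1))

/-- Substitution `M[k := N]` (de Bruijn). -/
def Lam.subst : Lam → ℕ → Lam → Lam
  | .var n, k, N => if n = k then N else if k < n then .var (n - 1) else .var n
  | .app M M', k, N => .app (M.subst k N) (M'.subst k N)
  | .abs M, k, N => .abs (M.subst (k + 1) (N.lift 0))

/-- β-equivalence of λ-terms. -/
inductive BetaEq : Lam → Lam → Prop
  | beta (M N : Lam) : BetaEq (.app (.abs M) N) (M.subst 0 N)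
  | refl (M : Lam) : BetaEq M M
  | symm {M N : Lam} : BetaEq M N → BetaEq N M
  | trans {M N P : Lam} : BetaEq M N → BetaEq N P → BetaEq M P
  | appCongr {M M' N N' : Lam} :
      BetaEq M M' → BetaEq N N' → BetaEq (.app M N) (.app M' N')
  | absCongr {M M' : Lam} : BetaEq M M' → BetaEq (.abs M) (.abs M')

/-- βη-equivalence of λ-terms. -/
inductive BetaEtaEq : Lam → Lam → Prop
  | beta (M N : Lam) : BetaEtaEq (.app (.abs M) N) (M.subst 0 N)
  | eta (M : Lam) : BetaEtaEq (.abs (.app (M.lift 0) (.var 0))) M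
  | refl (M : Lam) : BetaEtaEq M M
  | symm {M N : Lam} : BetaEtaEq M N → BetaEtaEq N M
  | trans {M N P : Lam} : BetaEtaEq M N → BetaEtaEq N P → BetaEtaEq M P
  | appCongr {M M' N N' : Lam} :
      BetaEtaEq M M' → BetaEtaEq N N' → BetaEtaEq (.app M N) (.app M' N')
  | absCongr {M M' : Lam} : BetaEtaEq M M' → BetaEtaEq (.abs M) (.abs M')

def lamBetaSetoid : Setoid Lam := ⟨BetaEq, ⟨BetaEq.refl, BetaEq.symm, BetaEq.trans⟩⟩

def lamBetaEtaSetoid : Setoid Lam :=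
  ⟨BetaEtaEq, ⟨BetaEtaEq.refl, BetaEtaEq.symm, BetaEtaEq.trans⟩⟩

/-- The pca `λ` of λ-terms modulo β-equivalence. -/
def LamBeta : Type := Quotient lamBetaSetoid

/-- The pca `λη` of λ-terms modulo βη-equivalence. -/
def LamBetaEta : Type := Quotient lamBetaEtaSetoid

/-- Application in `λ` (total). -/
def lamBetaApp : LamBeta → LamBeta → Part LamBeta := fun a b =>
  Part.some (Quotient.map₂ Lam.app (fun _ _ h1 _ _ h2 => BetaEq.appCongr h1 h2) a b)

/-- Application in `λη` (total). -/
def lamBetaEtaApp : LamBetaEta → LamBetaEta → Part LamBetaEta := fun a b =>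
  Part.some (Quotient.map₂ Lam.app (fun _ _ h1 _ _ h2 => BetaEtaEq.appCongr h1 h2) a b)


/-! ### A layer with honest function types -/

/-- Evaluation, with honest function types. -/
def ev (O : ℕ → Part ℕ) (c : OCode) (n : ℕ) : Part ℕ := evalo O c n

/-- The numbered functionals, with honest function types. -/
def ph (O : ℕ → Part ℕ) (e n : ℕ) : Part ℕ := ev O (OCode.ofNat e) n

/-- Relative computability, with honest function types. -/
def Rin (O ψ : ℕ → Part ℕ) : Prop := ∃ c, ∀ n, ev O c n = ψ n

theorem recursiveIn_iff {O ψ : ℕ → Part ℕ} : RecursiveIn O ψ ↔ Rin O ψ :=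
  ⟨fun ⟨c, hc⟩ => ⟨c, fun n => congrFun hc n⟩, fun ⟨c, hc⟩ => ⟨c, funext hc⟩⟩

theorem ev_zero (O : ℕ → Part ℕ) (n : ℕ) : ev O .zero n = Part.some 0 := rfl
theorem ev_succ (O : ℕ → Part ℕ) (n : ℕ) : ev O .succ n = Part.some (n + 1) := rfl
theorem ev_left (O : ℕ → Part ℕ) (n : ℕ) : ev O .left n = Part.some n.unpair.1 := rfl
theorem ev_right (O : ℕ → Part ℕ) (n : ℕ) : ev O .right n = Part.some n.unpair.2 := rfl
theorem ev_oracle (O : ℕ → Part ℕ) (n : ℕ) : ev O .oracle n = O n := rfl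

theorem ev_comp (O : ℕ → Part ℕ) (a b : OCode) (n : ℕ) :
    ev O (.comp a b) n = (ev O b n).bind (ev O a) := rfl

theorem seq_aux (p q : Part ℕ) : (Nat.pair <$> p <*> q) =
    p.bind fun x => q.bind fun y => Part.some (Nat.pair x y) := by
  simp only [Seq.seq, Functor.map]
  ext m
  simp [Part.mem_bind_iff, Part.mem_map_iff, eq_comm]

theorem ev_pair (O : ℕ → Part ℕ) (a b : OCode) (n : ℕ) :
    ev O (.pair a b) n = (ev O a n).bind fun x => (ev O b n).bind fun y =>
      Part.some (Nat.pair x y) := seq_aux _ _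

/-- Iteration used for `prec`. -/
def recP (p : Part ℕ) (q : ℕ → ℕ → Part ℕ) : ℕ → Part ℕ
  | 0 => p
  | n + 1 => (recP p q n).bind (q n)

theorem recP_eq (p : Part ℕ) (q : ℕ → ℕ → Part ℕ) (n : ℕ) :
    (n.rec p fun y IH => IH.bind (q y) : Part ℕ) = recP p q n := by
  induction n with
  | zero => rfl
  | succ n ih => exact congrArg (fun z => Part.bind z (q n)) ih

theorem ev_prec (O : ℕ → Part ℕ) (a b : OCode) (n : ℕ) :
    ev O (.prec a b) n = recP (ev O a n.unpair.1)
      (fun y i => ev O b (Nat.pair n.unpair.1 (Nat.pair y i))) n.unpair.2 :=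
  recP_eq _ _ _

/-- Unbounded search. -/
def findP (q : ℕ → Part ℕ) : Part ℕ := Nat.rfind fun n => (q n).map fun x => decide (x = 0)

theorem mem_findP {q : ℕ → Part ℕ} {k : ℕ} : k ∈ findP q ↔
    0 ∈ q k ∧ ∀ i < k, ∃ v, v ≠ 0 ∧ v ∈ q i := by
  refine Nat.mem_rfind.trans ?_
  change (true ∈ (q k).map (fun x => decide (x = 0)) ∧
    ∀ {m : ℕ}, m < k → false ∈ (q m).map (fun x => decide (x = 0))) ↔ _
  simp only [Part.mem_map_iff, decide_eq_true_eq, decide_eq_false_iff_not]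
  constructor
  · rintro ⟨⟨z, h1, rfl⟩, h2⟩
    refine ⟨h1, fun i hi => ?_⟩
    obtain ⟨v, hv, hv'⟩ := h2 hi
    exact ⟨v, hv', hv⟩
  · rintro ⟨h1, h2⟩
    refine ⟨⟨0, h1, rfl⟩, fun {i} hi => ?_⟩
    obtain ⟨v, hv, hv'⟩ := h2 i hi
    exact ⟨v, hv', hv⟩

theorem ev_rfind (O : ℕ → Part ℕ) (a : OCode) (n : ℕ) :
    ev O (.rfind' a) n =
      (findP fun i => ev O a (Nat.pair n.unpair.1 (i + n.unpair.2))).map (· + n.unpair.2) := rfl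

open Nat.Partrec (Code)

/-- Evaluation of Mathlib codes, with honest function types. -/
def cev (c : Code) (n : ℕ) : Part ℕ := c.eval n

theorem cev_zero (n : ℕ) : cev .zero n = Part.some 0 := rfl
theorem cev_succ (n : ℕ) : cev .succ n = Part.some (n + 1) := rfl
theorem cev_left (n : ℕ) : cev .left n = Part.some n.unpair.1 := rfl
theorem cev_right (n : ℕ) : cev .right n = Part.some n.unpair.2 := rfl

theorem cev_comp (a b : Code) (n : ℕ) :
    cev (.comp a b) n = (cev b n).bind (cev a) := rfl

theorem cev_pair (a b : Code) (n : ℕ) :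
    cev (.pair a b) n = (cev a n).bind fun x => (cev b n).bind fun y =>
      Part.some (Nat.pair x y) := seq_aux _ _

theorem cev_prec (a b : Code) (n : ℕ) :
    cev (.prec a b) n = recP (cev a n.unpair.1)
      (fun y i => cev b (Nat.pair n.unpair.1 (Nat.pair y i))) n.unpair.2 :=
  recP_eq _ _ _

theorem cev_rfind (a : Code) (n : ℕ) :
    cev (.rfind' a) n =
      (findP fun i => cev a (Nat.pair n.unpair.1 (i + n.unpair.2))).map (· + n.unpair.2) := rfl

/-! ### Basic closure properties of relative computability -/

theorem rec_of_code (O : ℕ → Part ℕ) (c : Code) : Rin O (cev c) := by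
  induction c with
  | zero => exact ⟨.zero, fun _ => rfl⟩
  | succ => exact ⟨.succ, fun _ => rfl⟩
  | left => exact ⟨.left, fun _ => rfl⟩
  | right => exact ⟨.right, fun _ => rfl⟩
  | pair a b iha ihb =>
    obtain ⟨ca, ha⟩ := iha
    obtain ⟨cb, hb⟩ := ihb
    exact ⟨.pair ca cb, fun n => by simp only [ev_pair, cev_pair, ha, hb]⟩
  | comp a b iha ihb =>
    obtain ⟨ca, ha⟩ := iha
    obtain ⟨cb, hb⟩ := ihb
    exact ⟨.comp ca cb, fun n => by rw [ev_comp, cev_comp, hb, funext ha]⟩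
  | prec a b iha ihb =>
    obtain ⟨ca, ha⟩ := iha
    obtain ⟨cb, hb⟩ := ihb
    exact ⟨.prec ca cb, fun n => by simp only [ev_prec, cev_prec, ha, hb]⟩
  | rfind' a iha =>
    obtain ⟨ca, ha⟩ := iha
    exact ⟨.rfind' ca, fun n => by simp only [ev_rfind, cev_rfind, ha]⟩

theorem rec_of_partrec {O f : ℕ → Part ℕ} (h : Nat.Partrec f) : Rin O f := by
  obtain ⟨c, rfl⟩ := Nat.Partrec.Code.exists_code.1 h
  exact rec_of_code O c

/-- Total functions computable from a partial oracle. -/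
def TC (O : ℕ → Part ℕ) (d : ℕ → ℕ) : Prop := Rin O (fun n => Part.some (d n))

theorem TC.of_primrec {O : ℕ → Part ℕ} {f : ℕ → ℕ} (h : Primrec f) : TC O f :=
  rec_of_partrec (Nat.Partrec.of_primrec (Primrec.nat_iff.1 h))

theorem Rin.congr {O ψ φ : ℕ → Part ℕ} (h : Rin O ψ) (e : ∀ n, ψ n = φ n) : Rin O φ :=
  (funext e : ψ = φ) ▸ h

theorem rec_comp {O : ℕ → Part ℕ} {ψ φ : ℕ → Part ℕ} (h1 : Rin O ψ) (h2 : Rin O φ) :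
    Rin O (fun n => (φ n).bind ψ) := by
  obtain ⟨c, hc⟩ := h1
  obtain ⟨d, hd⟩ := h2
  exact ⟨.comp c d, fun n => by rw [ev_comp, hd, funext hc]⟩

theorem rec_comp_tot {O : ℕ → Part ℕ} {ψ : ℕ → Part ℕ} {d : ℕ → ℕ} (h1 : Rin O ψ) (h2 : TC O d) :
    Rin O (fun n => ψ (d n)) :=
  (rec_comp h1 h2).congr fun _ => Part.bind_some _ _

theorem rec_pair {O : ℕ → Part ℕ} {ψ φ : ℕ → Part ℕ} (h1 : Rin O ψ) (h2 : Rin O φ) :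
    Rin O (fun n => (ψ n).bind fun a => (φ n).bind fun b => Part.some (Nat.pair a b)) := by
  obtain ⟨c, hc⟩ := h1
  obtain ⟨d, hd⟩ := h2
  exact ⟨.pair c d, fun n => by simp only [ev_pair, hc, hd]⟩

theorem TC.comp {O : ℕ → Part ℕ} {a b : ℕ → ℕ} (h1 : TC O a) (h2 : TC O b) :
    TC O (fun n => a (b n)) :=
  rec_comp_tot (ψ := fun n => Part.some (a n)) h1 h2

theorem TC.pair {O : ℕ → Part ℕ} {a b : ℕ → ℕ} (h1 : TC O a) (h2 : TC O b) :
    TC O (fun n => Nat.pair (a n) (b n)) :=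
  (rec_pair h1 h2).congr fun n => by simp only [Part.bind_some]

theorem TC.comp₂ {O : ℕ → Part ℕ} {g : ℕ → ℕ → ℕ} {a b : ℕ → ℕ} (hg : Primrec₂ g) (h1 : TC O a)
    (h2 : TC O b) : TC O (fun n => g (a n) (b n)) := by
  have hg' : Primrec (fun n : ℕ => g n.unpair.1 n.unpair.2) :=
    hg.comp (Primrec.fst.comp Primrec.unpair) (Primrec.snd.comp Primrec.unpair)
  have := (TC.of_primrec (O := O) hg').comp (h1.pair h2)
  simpa using this

theorem TC.id {O : ℕ → Part ℕ} : TC O (fun n => n) := TC.of_primrec Primrec.id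
theorem TC.const {O : ℕ → Part ℕ} (k : ℕ) : TC O (fun _ => k) := TC.of_primrec (Primrec.const k)
theorem TC.fst {O : ℕ → Part ℕ} : TC O (fun n => n.unpair.1) :=
  TC.of_primrec (Primrec.fst.comp Primrec.unpair)
theorem TC.snd {O : ℕ → Part ℕ} : TC O (fun n => n.unpair.2) :=
  TC.of_primrec (Primrec.snd.comp Primrec.unpair)

theorem rec_bind {O : ℕ → Part ℕ} {ψ φ : ℕ → Part ℕ} (h1 : Rin O ψ) (h2 : Rin O φ) :
    Rin O (fun n => (ψ n).bind fun m => φ (Nat.pair n m)) :=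
  (rec_comp h2 (rec_pair TC.id h1)).congr fun n => by
    simp only [Part.bind_some, Part.bind_assoc]

theorem TC.of_rec {O ψ : ℕ → Part ℕ} {d : ℕ → ℕ} (h : Rin O ψ) (H : ∀ n, d n ∈ ψ n) :
    TC O d := h.congr fun n => Part.eq_some_iff.2 (H n)

theorem TC.nat_rec {O : ℕ → Part ℕ} (z : ℕ) {φ : ℕ → Part ℕ} (h : Rin O φ) (f : ℕ → ℕ)
    (h0 : f 0 = z) (h1 : ∀ n, f (n + 1) ∈ φ (Nat.pair n (f n))) : TC O f := by
  obtain ⟨c, hc⟩ := TC.const (O := O) z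
  obtain ⟨d, hd⟩ := rec_comp_tot h TC.snd
  have h2 : Rin O (ev O (.prec c d)) := ⟨_, fun _ => rfl⟩
  have hp : TC O (fun n => Nat.pair 0 n) := (TC.const 0).pair TC.id
  refine TC.of_rec (rec_comp_tot h2 hp) fun n => ?_
  simp only [ev_prec, Nat.unpair_pair, hc, hd]
  induction n with
  | zero => rw [h0]; exact Part.mem_some _
  | succ n ih => exact Part.mem_bind ih (h1 n)

theorem rec_find {O : ℕ → Part ℕ} {d : ℕ → ℕ} (hd : TC O d) :
    Rin O (fun n => findP fun k => Part.some (d (Nat.pair n k))) := by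
  obtain ⟨c, hc⟩ := hd
  have h0 : Rin O (ev O (.rfind' c)) := ⟨_, fun _ => rfl⟩
  have hp : TC O (fun n => Nat.pair n 0) := TC.id.pair (TC.const 0)
  refine (rec_comp_tot h0 hp).congr fun n => ?_
  simp only [ev_rfind, Nat.unpair_pair, hc]
  simp [Part.map_id']

theorem mem_find_tot {d : ℕ → ℕ} {k : ℕ} : (k ∈ findP fun k => Part.some (d k)) ↔
    d k = 0 ∧ ∀ i < k, d i ≠ 0 := by
  rw [mem_findP]
  simp [eq_comm]

theorem find_tot_dom {d : ℕ → ℕ} : (findP fun k => Part.some (d k)).Dom ↔ ∃ k, d k = 0 := by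
  classical
  constructor
  · intro h
    obtain ⟨k, hk⟩ := Part.dom_iff_mem.1 h
    exact ⟨k, (mem_find_tot.1 hk).1⟩
  · intro h
    exact Part.dom_iff_mem.2 ⟨Nat.find h, mem_find_tot.2 ⟨Nat.find_spec h,
      fun i hi => Nat.find_min h hi⟩⟩

theorem rec_trans {O P ψ : ℕ → Part ℕ} (h : Rin O ψ) (hO : Rin P O) :
    Rin P ψ := by
  obtain ⟨c, hc⟩ := h
  obtain ⟨d, hd⟩ := hO
  refine Rin.congr ?_ hc
  clear hc
  induction c with
  | zero => exact ⟨.zero, fun _ => rfl⟩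
  | succ => exact ⟨.succ, fun _ => rfl⟩
  | left => exact ⟨.left, fun _ => rfl⟩
  | right => exact ⟨.right, fun _ => rfl⟩
  | oracle => exact ⟨d, hd⟩
  | pair a b iha ihb =>
    obtain ⟨ca, ha⟩ := iha
    obtain ⟨cb, hb⟩ := ihb
    exact ⟨.pair ca cb, fun n => by simp only [ev_pair, ha, hb]⟩
  | comp a b iha ihb =>
    obtain ⟨ca, ha⟩ := iha
    obtain ⟨cb, hb⟩ := ihb
    exact ⟨.comp ca cb, fun n => by rw [ev_comp, ev_comp, hb, funext ha]⟩
  | prec a b iha ihb =>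
    obtain ⟨ca, ha⟩ := iha
    obtain ⟨cb, hb⟩ := ihb
    exact ⟨.prec ca cb, fun n => by simp only [ev_prec, ha, hb]⟩
  | rfind' a iha =>
    obtain ⟨ca, ha⟩ := iha
    exact ⟨.rfind' ca, fun n => by simp only [ev_rfind, ha]⟩

/-- The characteristic function as an honest total function. -/
noncomputable def ch (X : Set ℕ) : ℕ → ℕ := X.indicator (fun _ => 1)

/-- The characteristic function as an oracle. -/
noncomputable def cp (X : Set ℕ) (n : ℕ) : Part ℕ := Part.some (ch X n)

theorem ch_eq_one {X : Set ℕ} {n : ℕ} : ch X n = 1 ↔ n ∈ X := by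
  by_cases h : n ∈ X <;> simp [ch, h]

theorem ch_eq_zero {X : Set ℕ} {n : ℕ} : ch X n = 0 ↔ n ∉ X := by
  by_cases h : n ∈ X <;> simp [ch, h]

theorem chi_eq (X : Set ℕ) : chi X = cp X := rfl

theorem TC.ch (X : Set ℕ) : TC (cp X) (ch X) := ⟨.oracle, fun _ => rfl⟩

theorem mem_jump {X : Set ℕ} {e : ℕ} : e ∈ jump X ↔ (ph (cp X) e e).Dom := Iff.rfl

/-! ### Code numbers -/

/-- A section of `OCode.ofNat`. -/
def enc : OCode → ℕ
  | .zero => 0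
  | .succ => 1
  | .left => 2
  | .right => 3
  | .oracle => 4
  | .pair a b => 4 * Nat.pair (enc a) (enc b) + 5
  | .comp a b => 4 * Nat.pair (enc a) (enc b) + 1 + 5
  | .prec a b => 4 * Nat.pair (enc a) (enc b) + 2 + 5
  | .rfind' a => 4 * Nat.pair (enc a) 0 + 3 + 5

theorem ofNat_pair (a b : ℕ) :
    OCode.ofNat (4 * Nat.pair a b + 5) = .pair (OCode.ofNat a) (OCode.ofNat b) := by
  rw [OCode.ofNat]
  have h1 : 4 * Nat.pair a b % 4 = 0 := by omega
  have h2 : 4 * Nat.pair a b / 4 = Nat.pair a b := by omega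
  simp [h1, h2]

theorem ofNat_comp (a b : ℕ) :
    OCode.ofNat (4 * Nat.pair a b + 1 + 5) = .comp (OCode.ofNat a) (OCode.ofNat b) := by
  rw [OCode.ofNat]
  have h1 : (4 * Nat.pair a b + 1) % 4 = 1 := by omega
  have h2 : (4 * Nat.pair a b + 1) / 4 = Nat.pair a b := by omega
  simp [h1, h2]

theorem ofNat_prec (a b : ℕ) :
    OCode.ofNat (4 * Nat.pair a b + 2 + 5) = .prec (OCode.ofNat a) (OCode.ofNat b) := by
  rw [OCode.ofNat]
  have h1 : (4 * Nat.pair a b + 2) % 4 = 2 := by omega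
  have h2 : (4 * Nat.pair a b + 2) / 4 = Nat.pair a b := by omega
  simp [h1, h2]

theorem ofNat_rfind (a b : ℕ) :
    OCode.ofNat (4 * Nat.pair a b + 3 + 5) = .rfind' (OCode.ofNat a) := by
  rw [OCode.ofNat]
  have h1 : (4 * Nat.pair a b + 3) % 4 = 3 := by omega
  have h2 : (4 * Nat.pair a b + 3) / 4 = Nat.pair a b := by omega
  simp [h1, h2]

theorem ofNat_enc (c : OCode) : OCode.ofNat (enc c) = c := by
  induction c with
  | zero => simp [enc, OCode.ofNat]
  | succ => simp [enc, OCode.ofNat]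
  | left => simp [enc, OCode.ofNat]
  | right => simp [enc, OCode.ofNat]
  | oracle => simp [enc, OCode.ofNat]
  | pair a b iha ihb => rw [enc, ofNat_pair, iha, ihb]
  | comp a b iha ihb => rw [enc, ofNat_comp, iha, ihb]
  | prec a b iha ihb => rw [enc, ofNat_prec, iha, ihb]
  | rfind' a iha => rw [enc, ofNat_rfind, iha]

theorem ph_enc (O : ℕ → Part ℕ) (c : OCode) (n : ℕ) : ph O (enc c) n = ev O c n := by
  rw [ph, ofNat_enc]

theorem exists_ph {O ψ : ℕ → Part ℕ} (h : Rin O ψ) : ∃ e, ∀ n, ph O e n = ψ n := by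
  obtain ⟨c, hc⟩ := h
  exact ⟨enc c, fun n => by rw [ph_enc, hc]⟩

theorem rec_ph (O : ℕ → Part ℕ) (e : ℕ) : Rin O (ph O e) := ⟨_, fun _ => rfl⟩

/-- Code numbers of constant functions. -/
def cnst : ℕ → ℕ
  | 0 => 0
  | n + 1 => 4 * Nat.pair 1 (cnst n) + 1 + 5

theorem ph_cnst (O : ℕ → Part ℕ) (k n : ℕ) : ph O (cnst k) n = Part.some k := by
  unfold ph
  induction k with
  | zero => simp only [cnst, OCode.ofNat, ev_zero]
  | succ k ih =>
    rw [cnst, ofNat_comp, ev_comp, ih, Part.bind_some]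
    simp only [OCode.ofNat, ev_succ]

theorem primrec_mkpair : Primrec₂ (fun a b : ℕ => 4 * Nat.pair a b) :=
  (Primrec.nat_mul.comp (Primrec.const 4) (Primrec₂.natPair.comp Primrec.fst Primrec.snd)).to₂

theorem primrec_cnst : Primrec cnst := by
  have h : Primrec₂ (fun (_ : ℕ) (i : ℕ) => 4 * Nat.pair 1 i + 1 + 5) :=
    (Primrec.nat_add.comp (Primrec.nat_add.comp
      (primrec_mkpair.comp (Primrec.const 1) Primrec.snd) (Primrec.const 1))
      (Primrec.const 5)).to₂
  refine (Primrec.nat_rec₁ 0 h).of_eq fun n => ?_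
  induction n with
  | zero => rfl
  | succ n ih => simp [cnst, ← ih]

/-- The s-m-n function. -/
def smn (c p : ℕ) : ℕ := 4 * Nat.pair c (4 * Nat.pair (cnst p) (4 * Nat.pair 2 3 + 5) + 5) + 1 + 5

theorem ph_smn (O : ℕ → Part ℕ) (c p x : ℕ) : ph O (smn c p) x = ph O c (Nat.pair p x) := by
  have := ph_cnst O p x
  unfold ph at this ⊢
  rw [smn, ofNat_comp, ofNat_pair, ofNat_pair, ev_comp, ev_pair, this, ev_pair]
  simp only [OCode.ofNat, ev_left, ev_right, Part.bind_some, Nat.pair_unpair]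

theorem primrec_smn : Primrec₂ smn :=
  (Primrec.nat_add.comp (Primrec.nat_add.comp (primrec_mkpair.comp Primrec.fst
    (Primrec.nat_add.comp (primrec_mkpair.comp (primrec_cnst.comp Primrec.snd)
      (Primrec.const _)) (Primrec.const 5))) (Primrec.const 1)) (Primrec.const 5)).to₂

theorem jump_of_dom {X : Set ℕ} {ψ : ℕ → Part ℕ} (h : Rin (cp X) ψ) :
    ∃ q : ℕ → ℕ, Primrec q ∧ ∀ p, q p ∈ jump X ↔ (ψ p).Dom := by
  obtain ⟨e, he⟩ := exists_ph (rec_comp_tot h TC.fst)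
  refine ⟨smn e, primrec_smn.comp (Primrec.const e) Primrec.id, fun p => ?_⟩
  rw [mem_jump, ph_smn, he]
  simp

/-! ### Recursion on code numbers -/

theorem primrec_code_rec {α β : Type*} [Primcodable α] [Primcodable β] [Inhabited β]
    (F : α → ℕ → β) (b : α → ℕ → β) (g : α × ℕ → β × β → β) (hb : Primrec₂ b) (hg : Primrec₂ g)
    (H0 : ∀ a n, n < 5 → F a n = b a n)
    (H1 : ∀ a n, F a (n + 5) =
      g (a, n % 4) (F a (n / 4).unpair.1, F a (n / 4).unpair.2)) : Primrec₂ F := by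
  refine Primrec.nat_strong_rec F (g := fun a L => some
    (if L.length < 5 then b a L.length else
      g (a, (L.length - 5) % 4) (L.getD ((L.length - 5) / 4).unpair.1 default,
        L.getD ((L.length - 5) / 4).unpair.2 default))) ?_ ?_
  · have hl : Primrec (fun p : α × List β => p.2.length) :=
      Primrec.list_length.comp Primrec.snd
    have hl5 : Primrec (fun p : α × List β => p.2.length - 5) :=
      Primrec.nat_sub.comp hl (Primrec.const 5)
    have hu : Primrec (fun p : α × List β => ((p.2.length - 5) / 4).unpair) :=
      Primrec.unpair.comp (Primrec.nat_div.comp hl5 (Primrec.const 4))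
    refine Primrec.option_some.comp (Primrec.ite (Primrec.nat_lt.comp hl (Primrec.const 5))
      (hb.comp Primrec.fst hl) (hg.comp (Primrec.fst.pair (Primrec.nat_mod.comp hl5
        (Primrec.const 4))) (Primrec.pair ?_ ?_)))
    · exact (Primrec.list_getD default).comp Primrec.snd (Primrec.fst.comp hu)
    · exact (Primrec.list_getD default).comp Primrec.snd (Primrec.snd.comp hu)
  · intro a n
    simp only [List.length_map, List.length_range]
    split_ifs with h
    · rw [H0 a n h]
    · obtain ⟨m, rfl⟩ : ∃ m, n = m + 5 := ⟨n - 5, by omega⟩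
      have h1 := Nat.unpair_left_le (m / 4)
      have h2 := Nat.unpair_right_le (m / 4)
      have h3 := Nat.div_le_self m 4
      rw [H1]
      simp only [Nat.add_sub_cancel]
      have l1 : (m / 4).unpair.1 < m + 5 := by omega
      have l2 : (m / 4).unpair.2 < m + 5 := by omega
      simp [List.getD, l1, l2]

/-! ### Monotonicity and continuity -/

theorem recP_mono {p p' : Part ℕ} {q q' : ℕ → ℕ → Part ℕ} (hp : ∀ m, m ∈ p → m ∈ p')
    (hq : ∀ y i m, m ∈ q y i → m ∈ q' y i) (n m : ℕ) (h : m ∈ recP p q n) : m ∈ recP p' q' n := by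
  induction n generalizing m with
  | zero => exact hp m h
  | succ n ih =>
    obtain ⟨i, h1, h2⟩ := Part.mem_bind_iff.1 h
    exact Part.mem_bind (ih i h1) (hq n i m h2)

theorem ev_mono {O P : ℕ → Part ℕ} (hO : ∀ n m, m ∈ O n → m ∈ P n) (c : OCode) (n m : ℕ)
    (h : m ∈ ev O c n) : m ∈ ev P c n := by
  induction c generalizing n m with
  | zero => exact h
  | succ => exact h
  | left => exact h
  | right => exact h
  | oracle => exact hO n m h
  | pair a b iha ihb =>
    rw [ev_pair] at h ⊢
    obtain ⟨x, h1, h2⟩ := Part.mem_bind_iff.1 h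
    obtain ⟨y, h3, h4⟩ := Part.mem_bind_iff.1 h2
    exact Part.mem_bind (iha n x h1) (Part.mem_bind (ihb n y h3) h4)
  | comp a b iha ihb =>
    rw [ev_comp] at h ⊢
    obtain ⟨x, h1, h2⟩ := Part.mem_bind_iff.1 h
    exact Part.mem_bind (ihb n x h1) (iha x m h2)
  | prec a b iha ihb =>
    rw [ev_prec] at h ⊢
    exact recP_mono (iha _) (fun y i => ihb _) _ _ h
  | rfind' a iha =>
    rw [ev_rfind] at h ⊢
    obtain ⟨k, h1, h2⟩ := (Part.mem_map_iff _).1 h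
    refine (Part.mem_map_iff _).2 ⟨k, ?_, h2⟩
    rw [mem_findP] at h1 ⊢
    refine ⟨iha _ _ h1.1, fun i hi => ?_⟩
    obtain ⟨v, hv, hv'⟩ := h1.2 i hi
    exact ⟨v, hv, iha _ _ hv'⟩

/-- Restriction of an oracle to the numbers below `s`. -/
def cut (O : ℕ → Part ℕ) (s n : ℕ) : Part ℕ := if n < s then O n else Part.none

theorem cut_mono {O : ℕ → Part ℕ} {s t : ℕ} (h : s ≤ t) (n m : ℕ) (hm : m ∈ cut O s n) :
    m ∈ cut O t n := by
  unfold cut at hm ⊢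
  split_ifs at hm with h1
  · rw [if_pos (lt_of_lt_of_le h1 h)]; exact hm
  · exact absurd hm (Part.notMem_none m)

theorem cut_le {O : ℕ → Part ℕ} {s : ℕ} (n m : ℕ) (hm : m ∈ cut O s n) : m ∈ O n := by
  unfold cut at hm
  split_ifs at hm with h1
  · exact hm
  · exact absurd hm (Part.notMem_none m)

theorem cut_ev_mono {O : ℕ → Part ℕ} {s t : ℕ} (h : s ≤ t) {c : OCode} {n m : ℕ}
    (hm : m ∈ ev (cut O s) c n) : m ∈ ev (cut O t) c n :=
  ev_mono (cut_mono h) c n m hm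

theorem ev_cont {O : ℕ → Part ℕ} (c : OCode) (n m : ℕ) (h : m ∈ ev O c n) :
    ∃ s, m ∈ ev (cut O s) c n := by
  induction c generalizing n m with
  | zero => exact ⟨0, h⟩
  | succ => exact ⟨0, h⟩
  | left => exact ⟨0, h⟩
  | right => exact ⟨0, h⟩
  | oracle =>
    refine ⟨n + 1, ?_⟩
    rw [ev_oracle, cut, if_pos (Nat.lt_succ_self n)]
    exact h
  | pair a b iha ihb =>
    rw [ev_pair] at h
    obtain ⟨x, h1, h2⟩ := Part.mem_bind_iff.1 h
    obtain ⟨y, h3, h4⟩ := Part.mem_bind_iff.1 h2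
    obtain ⟨s, hs⟩ := iha n x h1
    obtain ⟨t, ht⟩ := ihb n y h3
    refine ⟨max s t, ?_⟩
    rw [ev_pair]
    exact Part.mem_bind (cut_ev_mono (le_max_left s t) hs)
      (Part.mem_bind (cut_ev_mono (le_max_right s t) ht) h4)
  | comp a b iha ihb =>
    rw [ev_comp] at h
    obtain ⟨x, h1, h2⟩ := Part.mem_bind_iff.1 h
    obtain ⟨s, hs⟩ := ihb n x h1
    obtain ⟨t, ht⟩ := iha x m h2
    refine ⟨max s t, ?_⟩
    rw [ev_comp]
    exact Part.mem_bind (cut_ev_mono (le_max_left s t) hs) (cut_ev_mono (le_max_right s t) ht)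
  | prec a b iha ihb =>
    rw [ev_prec] at h
    simp only [ev_prec]
    generalize n.unpair.2 = k at h ⊢
    generalize n.unpair.1 = z at h ⊢
    induction k generalizing m with
    | zero => exact iha z m h
    | succ k ih =>
      obtain ⟨i, h1, h2⟩ := Part.mem_bind_iff.1 h
      obtain ⟨s, hs⟩ := ih i h1
      obtain ⟨t, ht⟩ := ihb _ _ h2
      exact ⟨max s t, Part.mem_bind (recP_mono
        (fun _ => cut_ev_mono (le_max_left s t)) (fun _ _ _ => cut_ev_mono (le_max_left s t)) _ _ hs)
        (cut_ev_mono (le_max_right s t) ht)⟩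
  | rfind' a iha =>
    rw [ev_rfind] at h
    obtain ⟨k, h1, h2⟩ := (Part.mem_map_iff _).1 h
    rw [mem_findP] at h1
    obtain ⟨s, hs⟩ := iha _ _ h1.1
    have key : ∀ j ≤ k, ∃ t, ∀ i < j, ∃ v, v ≠ 0 ∧
        v ∈ ev (cut O t) a (Nat.pair n.unpair.1 (i + n.unpair.2)) := by
      intro j
      induction j with
      | zero => exact fun _ => ⟨0, fun i hi => absurd hi (Nat.not_lt_zero i)⟩
      | succ j ihj =>
        intro hj
        obtain ⟨t, ht⟩ := ihj (by omega)
        obtain ⟨v, hv, hv'⟩ := h1.2 j (by omega)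
        obtain ⟨t', ht'⟩ := iha _ _ hv'
        refine ⟨max t t', fun i hi => ?_⟩
        rcases Nat.lt_succ_iff_lt_or_eq.1 hi with hi | rfl
        · obtain ⟨w, hw, hw'⟩ := ht i hi
          exact ⟨w, hw, cut_ev_mono (le_max_left t t') hw'⟩
        · exact ⟨v, hv, cut_ev_mono (le_max_right t t') ht'⟩
    obtain ⟨t, ht⟩ := key k le_rfl
    refine ⟨max s t, ?_⟩
    rw [ev_rfind]
    refine (Part.mem_map_iff _).2 ⟨k, ?_, h2⟩
    rw [mem_findP]
    refine ⟨cut_ev_mono (le_max_left s t) hs, fun i hi => ?_⟩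
    obtain ⟨v, hv, hv'⟩ := ht i hi
    exact ⟨v, hv, cut_ev_mono (le_max_right s t) hv'⟩

/-! ### Substituting a code for the oracle -/

/-- Replace the oracle by a code. -/
def osub (d : OCode) : OCode → OCode
  | .oracle => d
  | .pair a b => .pair (osub d a) (osub d b)
  | .comp a b => .comp (osub d a) (osub d b)
  | .prec a b => .prec (osub d a) (osub d b)
  | .rfind' a => .rfind' (osub d a)
  | .zero => .zero
  | .succ => .succ
  | .left => .left
  | .right => .right

theorem ev_osub (O : ℕ → Part ℕ) (d c : OCode) (n : ℕ) :
    ev O (osub d c) n = ev (ev O d) c n := by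
  induction c generalizing n with
  | zero => rfl
  | succ => rfl
  | left => rfl
  | right => rfl
  | oracle => rfl
  | pair a b iha ihb => simp only [osub, ev_pair, iha, ihb]
  | comp a b iha ihb => rw [osub, ev_comp, ev_comp, ihb, funext iha]
  | prec a b iha ihb => simp only [osub, ev_prec, iha, ihb]
  | rfind' a iha => simp only [osub, ev_rfind, iha]

theorem ofNat_add_five (n : ℕ) : OCode.ofNat (n + 5) =
    if n % 4 = 0 then .pair (OCode.ofNat (n / 4).unpair.1) (OCode.ofNat (n / 4).unpair.2)
    else if n % 4 = 1 then .comp (OCode.ofNat (n / 4).unpair.1) (OCode.ofNat (n / 4).unpair.2)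
    else if n % 4 = 2 then .prec (OCode.ofNat (n / 4).unpair.1) (OCode.ofNat (n / 4).unpair.2)
    else .rfind' (OCode.ofNat (n / 4).unpair.1) := by
  rw [OCode.ofNat]
  have : n % 4 < 4 := Nat.mod_lt _ (by norm_num)
  generalize n % 4 = r at this ⊢
  interval_cases r <;> simp

/-- Numerical version of `osub`. -/
def nsub (j : ℕ) (k : ℕ) : ℕ :=
  if k < 5 then (if k = 4 then j else k) else
    if _h : 5 ≤ k then
      4 * Nat.pair (nsub j ((k - 5) / 4).unpair.1) (nsub j ((k - 5) / 4).unpair.2)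
        + (k - 5) % 4 + 5
    else 0
  decreasing_by
    all_goals
      have h1 := Nat.unpair_left_le ((k - 5) / 4)
      have h2 := Nat.unpair_right_le ((k - 5) / 4)
      have h3 := Nat.div_le_self (k - 5) 4
      omega

theorem nsub_add_five (j n : ℕ) : nsub j (n + 5) =
    4 * Nat.pair (nsub j (n / 4).unpair.1) (nsub j (n / 4).unpair.2) + n % 4 + 5 := by
  rw [nsub]
  simp

theorem nsub_small (j n : ℕ) (h : n < 5) : nsub j n = if n = 4 then j else n := by
  rw [nsub]
  simp [h]

theorem ofNat_nsub (j k : ℕ) : OCode.ofNat (nsub j k) = osub (OCode.ofNat j) (OCode.ofNat k) := by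
  induction k using Nat.strong_induction_on with
  | _ k ih =>
    by_cases h : k < 5
    · rw [nsub_small j k h]
      interval_cases k <;> simp [OCode.ofNat, osub]
    · obtain ⟨m, rfl⟩ : ∃ m, k = m + 5 := ⟨k - 5, by omega⟩
      have h1 := Nat.unpair_left_le (m / 4)
      have h2 := Nat.unpair_right_le (m / 4)
      have h3 := Nat.div_le_self m 4
      have i1 := ih (m / 4).unpair.1 (by omega)
      have i2 := ih (m / 4).unpair.2 (by omega)
      rw [nsub_add_five, ofNat_add_five m]
      have hr : m % 4 < 4 := Nat.mod_lt _ (by norm_num)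
      generalize m % 4 = r at hr ⊢
      interval_cases r
      · rw [Nat.add_zero, ofNat_pair, i1, i2]; simp [osub]
      · rw [ofNat_comp, i1, i2]; simp [osub]
      · rw [ofNat_prec, i1, i2]; simp [osub]
      · rw [ofNat_rfind, i1]; simp [osub]

theorem ph_nsub (O : ℕ → Part ℕ) (j k n : ℕ) : ph O (nsub j k) n = ph (ph O j) k n := by
  rw [ph, ofNat_nsub, ev_osub]
  rfl

theorem primrec_nsub : Primrec₂ nsub := by
  refine primrec_code_rec nsub (fun j n => if n = 4 then j else n)
    (fun p q => 4 * Nat.pair q.1 q.2 + p.2 + 5) ?_ ?_ nsub_small nsub_add_five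
  · exact Primrec.ite (Primrec.eq.comp Primrec.snd (Primrec.const 4)) Primrec.fst Primrec.snd
  · exact (Primrec.nat_add.comp (Primrec.nat_add.comp (primrec_mkpair.comp
      (Primrec.fst.comp Primrec.snd) (Primrec.snd.comp Primrec.snd))
      (Primrec.snd.comp Primrec.fst)) (Primrec.const 5)).to₂

/-- A left inverse of `cnst`. -/
def icnst (k : ℕ) : ℕ :=
  if k < 5 then 0 else if _h : 5 ≤ k then icnst ((k - 5) / 4).unpair.2 + 1 else 0
  decreasing_by
    all_goals
      have h2 := Nat.unpair_right_le ((k - 5) / 4)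
      have h3 := Nat.div_le_self (k - 5) 4
      omega

theorem icnst_cnst (n : ℕ) : icnst (cnst n) = n := by
  induction n with
  | zero => rw [icnst]; simp [cnst]
  | succ n ih =>
    rw [icnst, cnst]
    have : (4 * Nat.pair 1 (cnst n) + 1) / 4 = Nat.pair 1 (cnst n) := by omega
    simp [this, ih]

theorem primrec_icnst : Primrec icnst := by
  have : Primrec₂ (fun (_ : Unit) k => icnst k) := by
    refine primrec_code_rec (fun (_ : Unit) k => icnst k) (fun _ _ => 0)
      (fun _ q => q.2 + 1) (Primrec.const 0).to₂
      (Primrec.succ.comp (Primrec.snd.comp Primrec.snd)).to₂ ?_ ?_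
    · intro _ n hn
      rw [icnst]; simp [hn]
    · intro _ n
      rw [icnst]; simp
  exact this.comp (Primrec.const ()) Primrec.id

/-! ### Translation to Mathlib codes with a finite oracle -/

/-- Finite oracles given by lists. -/
def lk (σ : List (ℕ × ℕ)) (n : ℕ) : Part ℕ := (σ.lookup n : Option ℕ)

theorem mem_lk {σ : List (ℕ × ℕ)} {n m : ℕ} : m ∈ lk σ n ↔ σ.lookup n = some m := by
  simp [lk]

theorem exists_lkCode : ∃ c : Code, ∀ σ n, cev c (Nat.pair (Encodable.encode σ) n) = lk σ n := by
  have h1 : Computable (fun n : ℕ =>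
      (Denumerable.ofNat (List (ℕ × ℕ)) n.unpair.1).lookup n.unpair.2) :=
    (Primrec.listLookup.comp (Primrec.snd.comp Primrec.unpair)
      ((Primrec.ofNat _).comp (Primrec.fst.comp Primrec.unpair))).to_comp
  obtain ⟨c, hc⟩ := Nat.Partrec.Code.exists_code.1 (Partrec.nat_iff.1 h1.ofOption)
  refine ⟨c, fun σ n => ?_⟩
  have := congrFun hc (Nat.pair (Encodable.encode σ) n)
  refine this.trans ?_
  simp [lk]

/-- A code for list lookup. -/
noncomputable def lkCode : Code := exists_lkCode.choose

theorem cev_lkCode (σ : List (ℕ × ℕ)) (n : ℕ) :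
    cev (lkCode.curry (Encodable.encode σ)) n = lk σ n :=
  (Nat.Partrec.Code.eval_curry _ _ _).trans (exists_lkCode.choose_spec σ n)

/-- Translation of oracle codes into Mathlib codes. -/
noncomputable def tr (σ : List (ℕ × ℕ)) : OCode → Code
  | .oracle => lkCode.curry (Encodable.encode σ)
  | .pair a b => .pair (tr σ a) (tr σ b)
  | .comp a b => .comp (tr σ a) (tr σ b)
  | .prec a b => .prec (tr σ a) (tr σ b)
  | .rfind' a => .rfind' (tr σ a)
  | .zero => .zero
  | .succ => .succ
  | .left => .left
  | .right => .right

theorem cev_tr (σ : List (ℕ × ℕ)) (c : OCode) (n : ℕ) : cev (tr σ c) n = ev (lk σ) c n := by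
  induction c generalizing n with
  | zero => rfl
  | succ => rfl
  | left => rfl
  | right => rfl
  | oracle => exact cev_lkCode σ n
  | pair a b iha ihb => simp only [tr, ev_pair, cev_pair, iha, ihb]
  | comp a b iha ihb => rw [tr, ev_comp, cev_comp, ihb, funext iha]
  | prec a b iha ihb => simp only [tr, ev_prec, cev_prec, iha, ihb]
  | rfind' a iha => simp only [tr, ev_rfind, cev_rfind, iha]

instance : Inhabited Code := ⟨.zero⟩

theorem primrec_tr : Primrec₂ (fun σ k => tr σ (OCode.ofNat k)) := by
  refine primrec_code_rec (fun σ k => tr σ (OCode.ofNat k))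
    (fun σ n => if n = 0 then .zero else if n = 1 then .succ else if n = 2 then .left
      else if n = 3 then .right else lkCode.curry (Encodable.encode σ))
    (fun p q => if p.2 = 0 then .pair q.1 q.2 else if p.2 = 1 then .comp q.1 q.2
      else if p.2 = 2 then .prec q.1 q.2 else .rfind' q.1) ?_ ?_ ?_ ?_
  · have hs : Primrec (fun p : List (ℕ × ℕ) × ℕ => p.2) := Primrec.snd
    refine Primrec.ite (Primrec.eq.comp hs (Primrec.const _)) (Primrec.const _)
      (Primrec.ite (Primrec.eq.comp hs (Primrec.const _)) (Primrec.const _)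
      (Primrec.ite (Primrec.eq.comp hs (Primrec.const _)) (Primrec.const _)
      (Primrec.ite (Primrec.eq.comp hs (Primrec.const _)) (Primrec.const _) ?_)))
    exact Nat.Partrec.Code.primrec₂_curry.comp (Primrec.const _) (Primrec.encode.comp Primrec.fst)
  · have hs : Primrec (fun p : (List (ℕ × ℕ) × ℕ) × (Code × Code) => p.1.2) :=
      Primrec.snd.comp Primrec.fst
    have ha : Primrec (fun p : (List (ℕ × ℕ) × ℕ) × (Code × Code) => p.2.1) :=
      Primrec.fst.comp Primrec.snd
    have hb : Primrec (fun p : (List (ℕ × ℕ) × ℕ) × (Code × Code) => p.2.2) :=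
      Primrec.snd.comp Primrec.snd
    exact Primrec.ite (Primrec.eq.comp hs (Primrec.const _))
      (Nat.Partrec.Code.primrec₂_pair.comp ha hb)
      (Primrec.ite (Primrec.eq.comp hs (Primrec.const _))
      (Nat.Partrec.Code.primrec₂_comp.comp ha hb)
      (Primrec.ite (Primrec.eq.comp hs (Primrec.const _))
      (Nat.Partrec.Code.primrec₂_prec.comp ha hb)
      (Nat.Partrec.Code.primrec_rfind'.comp ha)))
  · intro σ n hn
    interval_cases n <;> simp [OCode.ofNat, tr]
  · intro σ n
    rw [ofNat_add_five]
    split_ifs <;> rfl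

/-- Bounded evaluation with a finite oracle; `0` means no value yet. -/
noncomputable def evn (σ : List (ℕ × ℕ)) (k e n : ℕ) : ℕ :=
  Encodable.encode (Nat.Partrec.Code.evaln k (tr σ (OCode.ofNat e)) n)

theorem primrec_evn : Primrec (fun p : List (ℕ × ℕ) × ℕ × ℕ × ℕ =>
    evn p.1 p.2.1 p.2.2.1 p.2.2.2) := by
  have h : Primrec (fun p : List (ℕ × ℕ) × ℕ × ℕ × ℕ => tr p.1 (OCode.ofNat p.2.2.1)) :=
    primrec_tr.comp Primrec.fst (Primrec.fst.comp (Primrec.snd.comp Primrec.snd))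
  exact Primrec.encode.comp (Nat.Partrec.Code.primrec_evaln.comp
    (((Primrec.fst.comp Primrec.snd).pair h).pair
      (Primrec.snd.comp (Primrec.snd.comp Primrec.snd))))

theorem evn_eq_succ {σ : List (ℕ × ℕ)} {k e n m : ℕ} :
    evn σ k e n = m + 1 ↔ m ∈ Nat.Partrec.Code.evaln k (tr σ (OCode.ofNat e)) n := by
  unfold evn
  cases Nat.Partrec.Code.evaln k (tr σ (OCode.ofNat e)) n <;> simp

theorem evn_mono {σ : List (ℕ × ℕ)} {k l e n m : ℕ} (h : k ≤ l) (hk : evn σ k e n = m + 1) :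
    evn σ l e n = m + 1 :=
  evn_eq_succ.2 (Nat.Partrec.Code.evaln_mono h (evn_eq_succ.1 hk))

theorem mem_ph_lk {σ : List (ℕ × ℕ)} {e n m : ℕ} :
    m ∈ ph (lk σ) e n ↔ ∃ k, evn σ k e n = m + 1 := by
  simp only [evn_eq_succ]
  rw [ph, ← cev_tr]
  exact Nat.Partrec.Code.evaln_complete

/-- Initial segments of a characteristic function, as finite oracles. -/
noncomputable def seg (X : Set ℕ) : ℕ → List (ℕ × ℕ)
  | 0 => []
  | s + 1 => (s, ch X s) :: seg X s

theorem lk_seg (X : Set ℕ) (s n : ℕ) : lk (seg X s) n = cut (cp X) s n := by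
  induction s with
  | zero => simp [seg, lk, cut]
  | succ s ih =>
    unfold lk cut at ih ⊢
    rw [seg, List.lookup_cons]
    by_cases h : n = s
    · subst h; simp [cp]
    · have hb : (n == s) = false := by simpa using h
      rw [hb]
      simp only [ih]
      by_cases h2 : n < s
      · rw [if_pos h2, if_pos (by omega)]
      · rw [if_neg h2, if_neg (by omega)]

theorem mem_ph_seg_mono {X : Set ℕ} {s t e n m : ℕ} (h : s ≤ t) (hm : m ∈ ph (lk (seg X s)) e n) :
    m ∈ ph (lk (seg X t)) e n := by
  rw [funext (lk_seg X s)] at hm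
  rw [funext (lk_seg X t)]
  exact cut_ev_mono h hm

theorem mem_ph_iff {X : Set ℕ} {e n m : ℕ} :
    m ∈ ph (cp X) e n ↔ ∃ s, m ∈ ph (lk (seg X s)) e n := by
  constructor
  · intro h
    obtain ⟨s, hs⟩ := ev_cont _ _ _ h
    refine ⟨s, ?_⟩
    rw [funext (lk_seg X s)]
    exact hs
  · rintro ⟨s, hs⟩
    rw [funext (lk_seg X s)] at hs
    exact ev_mono cut_le _ _ _ hs

theorem TC.seg (X : Set ℕ) : TC (cp X) (fun s => Encodable.encode (seg X s)) := by
  have h : Primrec₂ (fun (p q : ℕ) => Encodable.encode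
      ((p.unpair.1, q) :: Denumerable.ofNat (List (ℕ × ℕ)) p.unpair.2)) :=
    Primrec.encode.comp (Primrec.list_cons.comp
      ((Primrec.fst.comp (Primrec.unpair.comp Primrec.fst)).pair Primrec.snd)
      ((Primrec.ofNat _).comp (Primrec.snd.comp (Primrec.unpair.comp Primrec.fst))))
  have h2 := TC.comp₂ (O := cp X) h TC.id ((TC.ch X).comp TC.fst)
  refine TC.nat_rec (Encodable.encode ([] : List (ℕ × ℕ))) h2 _ rfl fun n => ?_
  simp [PCAEmb.seg]

/-- The universal function relative to `X`. -/
theorem rec_univ (X : Set ℕ) : Rin (cp X) (fun p => ph (cp X) p.unpair.1 p.unpair.2) := by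
  have h1 : Primrec₂ (fun (a c : ℕ) => evn (Denumerable.ofNat (List (ℕ × ℕ)) c)
      a.unpair.2.unpair.2 a.unpair.1.unpair.1 a.unpair.1.unpair.2) := by
    have hu : Primrec (fun p : ℕ × ℕ => p.1.unpair) := Primrec.unpair.comp Primrec.fst
    have hu1 := Primrec.unpair.comp (Primrec.fst.comp hu)
    have hu2 := Primrec.unpair.comp (Primrec.snd.comp hu)
    exact primrec_evn.comp (((Primrec.ofNat _).comp Primrec.snd).pair
      ((Primrec.snd.comp hu2).pair ((Primrec.fst.comp hu1).pair (Primrec.snd.comp hu1))))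
  have h2 : TC (cp X) (fun a => evn (seg X a.unpair.2.unpair.1)
      a.unpair.2.unpair.2 a.unpair.1.unpair.1 a.unpair.1.unpair.2) := by
    have := TC.comp₂ h1 TC.id ((TC.seg X).comp (TC.fst.comp TC.snd))
    simpa using this
  have h3 := TC.comp₂ Primrec.nat_sub (TC.const 1) h2
  have h4 := TC.comp₂ Primrec.nat_sub h2 (TC.const 1)
  refine (rec_bind (rec_find h3) h4).congr fun p => ?_
  simp only [Nat.unpair_pair]
  generalize p.unpair.1 = e
  generalize p.unpair.2 = n
  have key : ∀ t m : ℕ, evn (PCAEmb.seg X t.unpair.1) t.unpair.2 e n = m + 1 → m ∈ ph (cp X) e n :=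
    fun t m h => mem_ph_iff.2 ⟨_, mem_ph_lk.2 ⟨_, h⟩⟩
  ext m
  rw [Part.mem_bind_iff]
  constructor
  · rintro ⟨t, ht, hm⟩
    rw [mem_find_tot] at ht
    rw [Part.mem_some_iff] at hm
    exact key t m (by omega)
  · intro hm
    obtain ⟨s, hs⟩ := mem_ph_iff.1 hm
    obtain ⟨k, hk⟩ := mem_ph_lk.1 hs
    have hd : (findP fun t => Part.some (1 - evn (PCAEmb.seg X t.unpair.1) t.unpair.2 e n)).Dom :=
      find_tot_dom.2 ⟨Nat.pair s k, by simp only [Nat.unpair_pair]; omega⟩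
    obtain ⟨t, ht⟩ := Part.dom_iff_mem.1 hd
    refine ⟨t, ht, ?_⟩
    rw [mem_find_tot] at ht
    obtain ⟨v, hv⟩ : ∃ v, evn (PCAEmb.seg X t.unpair.1) t.unpair.2 e n = v + 1 :=
      ⟨evn (PCAEmb.seg X t.unpair.1) t.unpair.2 e n - 1, by omega⟩
    have := Part.mem_unique hm (key t v hv)
    subst this
    rw [hv]
    exact Part.mem_some _


/-! ### From the double jump to an embedding -/

theorem part_ne_iff (u v : Part ℕ) :
    ((¬ ∃ a, a ∈ u ∧ a ∈ v) ∧ ¬ (¬ u.Dom ∧ ¬ v.Dom)) ↔ u ≠ v := by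
  constructor
  · rintro ⟨h1, h2⟩ rfl
    refine h2 ⟨?_, ?_⟩ <;>
    · intro h
      obtain ⟨a, ha⟩ := Part.dom_iff_mem.1 h
      exact h1 ⟨a, ha, ha⟩
  · intro h
    constructor
    · rintro ⟨a, ha, hb⟩
      exact h (by rw [Part.eq_some_iff.2 ha, Part.eq_some_iff.2 hb])
    · rintro ⟨h1, h2⟩
      exact h (by rw [Part.eq_none_iff'.2 h1, Part.eq_none_iff'.2 h2])

theorem mem_subApp {α : Type*} {app : α → α → Part α} {P : α → Prop} {a b c : Subtype P} :
    c ∈ subApp app P a b ↔ c.1 ∈ app a.1 b.1 := by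
  unfold subApp
  rw [Part.mem_bind_iff]
  constructor
  · rintro ⟨d, hd, hc⟩
    obtain ⟨h1, h2⟩ := Part.mem_assert_iff.1 hc
    rw [Part.mem_some_iff] at h2
    subst h2
    exact hd
  · intro h
    exact ⟨c.1, h, Part.mem_assert_iff.2 ⟨c.2, Part.mem_some _⟩⟩

/-- Join, with honest types. -/
def pj (f g : ℕ → Part ℕ) (n : ℕ) : Part ℕ := if n % 2 = 0 then f (n / 2) else g (n / 2)

theorem mem_bXApp {X : Set ℕ} {θ ρ τ : Bel X} : τ ∈ bXApp X θ ρ ↔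
    ∀ n, τ.1 n = (θ.1 0).bind fun k => ph (pj θ.1 ρ.1) k n := by
  refine (mem_subApp (P := fun θ => RecursiveIn (chi X) θ)).trans ?_
  unfold bApp
  refine Part.mem_some_iff.trans ?_
  constructor
  · intro h n
    exact congrFun h n
  · intro h
    exact funext h

theorem exists_neq (X : Set ℕ) : ∃ q : ℕ → ℕ, Primrec q ∧ ∀ p, q p ∈ jump (jump X) ↔
    ∃ n, ph (cp X) p.unpair.1 n ≠ ph (cp X) p.unpair.2 n := by
  have hU := rec_univ X
  have hd : Primrec (fun t : ℕ => (t.unpair.1.unpair.1 - t.unpair.1.unpair.2) +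
      (t.unpair.1.unpair.2 - t.unpair.1.unpair.1)) := by
    have h0 : Primrec (fun t : ℕ => t.unpair.1.unpair) :=
      Primrec.unpair.comp (Primrec.fst.comp Primrec.unpair)
    have h1 := Primrec.fst.comp h0
    have h2 := Primrec.snd.comp h0
    exact Primrec.nat_add.comp (Primrec.nat_sub.comp h1 h2) (Primrec.nat_sub.comp h2 h1)
  have hL : TC (cp X) (fun r => Nat.pair r.unpair.1.unpair.1 r.unpair.2) :=
    (TC.fst.comp TC.fst).pair TC.snd
  have hR : TC (cp X) (fun r => Nat.pair r.unpair.1.unpair.2 r.unpair.2) :=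
    (TC.snd.comp TC.fst).pair TC.snd
  have hL' : TC (cp (jump X)) (fun r => Nat.pair r.unpair.1.unpair.1 r.unpair.2) :=
    (TC.fst.comp TC.fst).pair TC.snd
  have hR' : TC (cp (jump X)) (fun r => Nat.pair r.unpair.1.unpair.2 r.unpair.2) :=
    (TC.snd.comp TC.fst).pair TC.snd
  obtain ⟨q1, hq1, hq1'⟩ := jump_of_dom (rec_comp (rec_find (TC.of_primrec hd))
    (rec_pair (rec_comp_tot hU hL) (rec_comp_tot hU hR)))
  obtain ⟨q2, hq2, hq2'⟩ := jump_of_dom hU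
  have hD : TC (cp (jump X)) (fun r => ch (jump X) (q1 r) +
      (1 - (ch (jump X) (q2 (Nat.pair r.unpair.1.unpair.1 r.unpair.2)) +
        ch (jump X) (q2 (Nat.pair r.unpair.1.unpair.2 r.unpair.2))))) :=
    TC.comp₂ Primrec.nat_add ((TC.ch _).comp (TC.of_primrec hq1))
      (TC.comp₂ Primrec.nat_sub (TC.const 1) (TC.comp₂ Primrec.nat_add
        ((TC.ch _).comp ((TC.of_primrec hq2).comp hL'))
        ((TC.ch _).comp ((TC.of_primrec hq2).comp hR'))))
  obtain ⟨q, hq, hq'⟩ := jump_of_dom (rec_find hD)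
  refine ⟨q, hq, fun p => ?_⟩
  rw [hq', find_tot_dom]
  refine exists_congr fun n => ?_
  have k1 := hq1' (Nat.pair p n)
  have k2 := hq2' (Nat.pair p.unpair.1 n)
  have k3 := hq2' (Nat.pair p.unpair.2 n)
  simp only [Nat.unpair_pair] at k1 k2 k3 ⊢
  have c1 : q1 (Nat.pair p n) ∈ jump X ↔ ∃ a, a ∈ ph (cp X) p.unpair.1 n ∧
      a ∈ ph (cp X) p.unpair.2 n := by
    rw [k1]
    constructor
    · intro h
      obtain ⟨v, hv⟩ := Part.dom_iff_mem.1 h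
      obtain ⟨w, hw, hv⟩ := Part.mem_bind_iff.1 hv
      obtain ⟨a, ha, hw⟩ := Part.mem_bind_iff.1 hw
      obtain ⟨b, hb, hw⟩ := Part.mem_bind_iff.1 hw
      rw [Part.mem_some_iff] at hw
      subst hw
      have := (mem_find_tot.1 hv).1
      simp only [Nat.unpair_pair] at this
      have hab : a = b := by omega
      subst hab
      exact ⟨a, ha, hb⟩
    · rintro ⟨a, ha, hb⟩
      rw [Part.eq_some_iff.2 ha, Part.eq_some_iff.2 hb]
      simp only [Part.bind_some]
      exact find_tot_dom.2 ⟨0, by simp⟩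
  have e1 := ch_eq_zero (X := jump X) (n := q1 (Nat.pair p n))
  have e2 := ch_eq_zero (X := jump X) (n := q2 (Nat.pair p.unpair.1 n))
  have e3 := ch_eq_zero (X := jump X) (n := q2 (Nat.pair p.unpair.2 n))
  rw [c1] at e1
  rw [k2] at e2
  rw [k3] at e3
  have : (ch (jump X) (q1 (Nat.pair p n)) + (1 - (ch (jump X) (q2 (Nat.pair p.unpair.1 n)) +
      ch (jump X) (q2 (Nat.pair p.unpair.2 n)))) = 0) ↔
      (ch (jump X) (q1 (Nat.pair p n)) = 0 ∧ ¬ (ch (jump X) (q2 (Nat.pair p.unpair.1 n)) = 0 ∧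
      ch (jump X) (q2 (Nat.pair p.unpair.2 n)) = 0)) := by omega
  rw [this, e1, e2, e3]
  exact part_ne_iff _ _

theorem exists_can {X Y : Set ℕ} (h : Rin (cp Y) (cp (jump (jump X)))) : ∃ can : ℕ → ℕ,
    TC (cp Y) can ∧ (∀ e n, ph (cp X) (can e) n = ph (cp X) e n) ∧
    ∀ e e', (∀ n, ph (cp X) e n = ph (cp X) e' n) → can e = can e' := by
  obtain ⟨q, hq, hq'⟩ := exists_neq X
  have hd : TC (cp Y) (fun p => ch (jump (jump X)) (q p)) :=
    TC.comp (a := ch (jump (jump X))) h (TC.of_primrec hq)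
  have key : ∀ e e', ch (jump (jump X)) (q (Nat.pair e e')) = 0 ↔
      ∀ n, ph (cp X) e n = ph (cp X) e' n := by
    intro e e'
    rw [ch_eq_zero, hq']
    simp only [Nat.unpair_pair]
    push Not
    rfl
  have hdom : ∀ e, (findP fun k => Part.some (ch (jump (jump X)) (q (Nat.pair e k)))).Dom :=
    fun e => find_tot_dom.2 ⟨e, (key e e).2 fun _ => rfl⟩
  refine ⟨fun e => (findP _).get (hdom e), TC.of_rec (rec_find hd) fun e => Part.get_mem _, ?_, ?_⟩
  · intro e n
    exact ((key _ _).1 (mem_find_tot.1 (Part.get_mem (hdom e))).1 n).symm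
  · intro e e' hee
    have h1 := mem_find_tot.1 (Part.get_mem (hdom e))
    have h2 := mem_find_tot.1 (Part.get_mem (hdom e'))
    refine Part.mem_unique (Part.get_mem (hdom e)) (mem_find_tot.2 ⟨?_, fun i hi => ?_⟩)
    · exact (key _ _).2 fun n => (hee n).trans ((key _ _).1 h2.1 n)
    · intro h0
      exact h2.2 i hi ((key _ _).2 fun n => (hee n).symm.trans ((key _ _).1 h0 n))

theorem exists_app (X : Set ℕ) : ∃ a : ℕ → ℕ, Primrec a ∧ ∀ e e' n,
    ph (cp X) (a (Nat.pair e e')) n =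
      (ph (cp X) e 0).bind fun k => ph (pj (ph (cp X) e) (ph (cp X) e')) k n := by
  have hU := rec_univ X
  have hsel : Primrec (fun t : ℕ => Nat.pair
      (if t.unpair.2 % 2 = 0 then t.unpair.1.unpair.1 else t.unpair.1.unpair.2)
      (t.unpair.2 / 2)) := by
    have h0 : Primrec (fun t : ℕ => t.unpair.1.unpair) :=
      Primrec.unpair.comp (Primrec.fst.comp Primrec.unpair)
    have h2 : Primrec (fun t : ℕ => t.unpair.2) := Primrec.snd.comp Primrec.unpair
    exact Primrec₂.natPair.comp (Primrec.ite (Primrec.eq.comp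
      (Primrec.nat_mod.comp h2 (Primrec.const 2)) (Primrec.const 0))
      (Primrec.fst.comp h0) (Primrec.snd.comp h0))
      (Primrec.nat_div.comp h2 (Primrec.const 2))
  obtain ⟨c2, hc2⟩ := exists_ph (rec_comp_tot hU (TC.of_primrec hsel))
  have hj : ∀ e e', ph (cp X) (smn c2 (Nat.pair e e')) = pj (ph (cp X) e) (ph (cp X) e') := by
    intro e e'
    funext n
    rw [ph_smn, hc2]
    simp only [Nat.unpair_pair, pj]
    split_ifs <;> rfl
  have hA : TC (cp X) (fun t => Nat.pair t.unpair.1.unpair.1 0) :=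
    (TC.fst.comp TC.fst).pair (TC.const 0)
  have hB : Primrec (fun t : ℕ => Nat.pair (nsub (smn c2 t.unpair.1.unpair.1) t.unpair.2)
      t.unpair.1.unpair.2) := by
    have h0 : Primrec (fun t : ℕ => t.unpair.1.unpair) :=
      Primrec.unpair.comp (Primrec.fst.comp Primrec.unpair)
    have h2 : Primrec (fun t : ℕ => t.unpair.2) := Primrec.snd.comp Primrec.unpair
    exact Primrec₂.natPair.comp (primrec_nsub.comp (primrec_smn.comp (Primrec.const _)
      (Primrec.fst.comp h0)) h2) (Primrec.snd.comp h0)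
  obtain ⟨c1, hc1⟩ := exists_ph (rec_bind (rec_comp_tot hU hA)
    (rec_comp_tot hU (TC.of_primrec hB)))
  refine ⟨smn c1, primrec_smn.comp (Primrec.const _) Primrec.id, fun e e' n => ?_⟩
  rw [ph_smn, hc1]
  simp only [Nat.unpair_pair, ph_nsub, hj]

theorem exists_emb {X Y : Set ℕ} (h : Rin (cp Y) (cp (jump (jump X)))) :
    ∃ f : Bel X → ℕ, IsPCAEmbedding (bXApp X) (k1App Y) f := by
  obtain ⟨can, hcan, hcan1, hcan2⟩ := exists_can h
  obtain ⟨a, ha, ha'⟩ := exists_app X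
  have hm : Primrec (fun m : ℕ => ((m - 6) / 4).unpair) :=
    Primrec.unpair.comp (Primrec.nat_div.comp (Primrec.nat_sub.comp Primrec.id
      (Primrec.const 6)) (Primrec.const 4))
  have hinv : Primrec (fun m : ℕ => icnst ((((m - 6) / 4).unpair.2 - 5) / 4).unpair.1) :=
    primrec_icnst.comp (Primrec.fst.comp (Primrec.unpair.comp (Primrec.nat_div.comp
      (Primrec.nat_sub.comp (Primrec.snd.comp hm) (Primrec.const 5)) (Primrec.const 4))))
  have s1 : ∀ c p, ((smn c p - 6) / 4).unpair.1 = c := by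
    intro c p
    rw [smn, show ∀ x, (4 * x + 1 + 5 - 6) / 4 = x from fun x => by omega, Nat.unpair_pair]
  have s2 : ∀ c p, icnst ((((smn c p - 6) / 4).unpair.2 - 5) / 4).unpair.1 = p := by
    intro c p
    rw [smn, show ∀ x, (4 * x + 1 + 5 - 6) / 4 = x from fun x => by omega, Nat.unpair_pair]
    simp only
    rw [show ∀ x, (4 * x + 5 - 5) / 4 = x from fun x => by omega, Nat.unpair_pair, icnst_cnst]
  have hΨ : TC (cp Y) (fun t => smn ((t.unpair.2 - 6) / 4).unpair.1 (can (a (Nat.pair t.unpair.1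
      (icnst ((((t.unpair.2 - 6) / 4).unpair.2 - 5) / 4).unpair.1))))) :=
    TC.comp₂ primrec_smn ((TC.of_primrec (Primrec.fst.comp hm)).comp TC.snd)
      (hcan.comp ((TC.of_primrec ha).comp (TC.fst.pair ((TC.of_primrec hinv).comp TC.snd))))
  obtain ⟨C, hC⟩ := exists_ph hΨ
  have hix : ∀ θ : Bel X, ∃ e, ∀ n, ph (cp X) e n = θ.1 n :=
    fun θ => exists_ph (recursiveIn_iff.1 θ.2)
  choose ix hix using hix
  refine ⟨fun θ => smn C (can (ix θ)), ?_, ?_⟩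
  · intro θ ρ hθ
    have : can (ix θ) = can (ix ρ) := by
      have := congrArg (fun m => icnst ((((m - 6) / 4).unpair.2 - 5) / 4).unpair.1) hθ
      simpa only [s2] using this
    apply Subtype.ext
    funext n
    rw [← hix, ← hix, ← hcan1 (ix θ), this, hcan1]
  · intro θ ρ τ hτ
    have hτ' := mem_bXApp.1 hτ
    change smn C (can (ix τ)) ∈ ph (cp Y) (smn C (can (ix θ))) (smn C (can (ix ρ)))
    rw [ph_smn, hC]
    simp only [Nat.unpair_pair, s1, s2, Part.mem_some_iff]
    congr 1
    apply hcan2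
    intro n
    have e1 : ph (cp X) (can (ix θ)) = θ.1 := funext fun n => (hcan1 _ n).trans (hix _ n)
    have e2 : ph (cp X) (can (ix ρ)) = ρ.1 := funext fun n => (hcan1 _ n).trans (hix _ n)
    rw [ha', e1, e2, hix, hτ']

/-! ### From an embedding to the double jump -/

/-- Code for doubling the successor. -/
def dblCode : OCode :=
  .comp (.prec .zero (.comp .succ (.comp .succ (.comp .right .right)))) (.pair .zero .succ)

theorem ev_dblCode (O : ℕ → Part ℕ) (n : ℕ) : ev O dblCode n = Part.some (2 * (n + 1)) := by
  have key : ∀ k, recP (Part.some 0) (fun y i => ev O (.comp .succ (.comp .succ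
      (.comp .right .right))) (Nat.pair 0 (Nat.pair y i))) k = Part.some (2 * k) := by
    intro k
    induction k with
    | zero => rfl
    | succ k ih =>
      rw [recP, ih]
      simp only [ev_comp, ev_succ, ev_right, Part.bind_some, Nat.unpair_pair]
      congr 1
  rw [dblCode, ev_comp, ev_pair, ev_zero, ev_succ]
  simp only [Part.bind_some]
  rw [ev_prec]
  simp only [Nat.unpair_pair, ev_zero]
  exact key (n + 1)

/-- Code of the program which reads the row number from the argument and looks up the row. -/
def rowCode : OCode :=
  .comp .oracle (.comp dblCode (.pair (.comp .oracle (OCode.ofNat (cnst 1))) (.pair .left .right)))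

theorem ev_rowCode (O : ℕ → Part ℕ) (x : ℕ) : ev O rowCode x =
    (O 1).bind fun n => O (2 * (Nat.pair n x + 1)) := by
  have h1 : ev O (OCode.ofNat (cnst 1)) x = Part.some 1 := ph_cnst O 1 x
  have h2 : ev O (.pair .left .right) x = Part.some x := by
    rw [ev_pair, ev_left, ev_right]
    simp
  rw [rowCode, ev_comp, ev_comp, ev_pair, ev_comp, h1, h2, Part.bind_some, ev_oracle]
  simp only [Part.bind_some, Part.bind_assoc, ev_dblCode]
  rfl

theorem pj_two_mul (f g : ℕ → Part ℕ) (m : ℕ) : pj f g (2 * m) = f m := by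
  rw [pj, if_pos (by omega), Nat.mul_div_cancel_left _ (by norm_num)]

theorem exists_row {X : Set ℕ} {B : ℕ → Part ℕ} (hB : Rin (cp X) B) : ∃ T : Bel X,
    ∀ (n : ℕ) (ρ τ : Bel X), ρ.1 0 = Part.some n → (∀ x, τ.1 x = B (Nat.pair n x)) →
      τ ∈ bXApp X T ρ := by
  obtain ⟨b, hb⟩ := exists_ph hB
  have hp : Primrec (fun n : ℕ => Nat.pair (if n = 0 then cnst (enc rowCode) else b) (n - 1)) :=
    Primrec₂.natPair.comp (Primrec.ite (Primrec.eq.comp Primrec.id (Primrec.const 0))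
      (Primrec.const _) (Primrec.const _)) (Primrec.nat_sub.comp Primrec.id (Primrec.const 1))
  have hT := rec_comp_tot (rec_univ X) (TC.of_primrec hp)
  simp only [Nat.unpair_pair] at hT
  refine ⟨⟨_, recursiveIn_iff.2 hT⟩, fun n ρ τ hρ hτ => mem_bXApp.2 fun x => ?_⟩
  simp only [if_true, ph_cnst, Part.bind_some, ph_enc]
  rw [ev_rowCode, hτ]
  have e1 : ∀ f : ℕ → Part ℕ, pj f ρ.1 1 = Part.some n := fun f => hρ
  rw [e1, Part.bind_some]
  refine Eq.trans ?_ (pj_two_mul _ _ _).symm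
  simp [hb]

theorem le_of_emb {X Y : Set ℕ} {f : Bel X → ℕ} (hf : IsPCAEmbedding (bXApp X) (k1App Y) f)
    {Z : Set ℕ} {B : ℕ → Part ℕ} (hB : Rin (cp X) B)
    (hZ : ∀ e, e ∉ Z ↔ ∀ z, B (Nat.pair e z) = Part.some 0) : Rin (cp Y) (cp Z) := by
  have happ : ∀ a a' c : Bel X, c ∈ bXApp X a a' → f c ∈ ph (cp Y) (f a) (f a') := hf.2
  have hconst : ∀ n : ℕ, ∃ c : Bel X, ∀ x, c.1 x = Part.some n :=
    fun n => ⟨⟨_, recursiveIn_iff.2 (TC.const n)⟩, fun _ => rfl⟩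
  choose con hcon using hconst
  have hrow : ∀ n : ℕ, ∃ c : Bel X, ∀ x, c.1 x = B (Nat.pair n x) :=
    fun n => ⟨⟨_, recursiveIn_iff.2 (rec_comp_tot hB ((TC.const n).pair TC.id))⟩, fun _ => rfl⟩
  choose b hb using hrow
  obtain ⟨S, hS⟩ := exists_row (X := X) (TC.comp₂ Primrec.nat_add TC.fst (TC.const 1))
  obtain ⟨T, hT⟩ := exists_row hB
  have h1 : TC (cp Y) (fun n => f (con n)) := by
    refine TC.nat_rec (f (con 0)) (rec_comp_tot (rec_ph (cp Y) (f S)) TC.snd) _ rfl fun n => ?_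
    simp only [Nat.unpair_pair]
    refine happ _ _ _ (hS n _ _ (hcon n 0) fun x => ?_)
    simp [hcon]
  have h2 : TC (cp Y) (fun n => f (b n)) :=
    TC.of_rec (rec_comp_tot (rec_ph (cp Y) (f T)) h1) fun n =>
      happ _ _ _ (hT n _ _ (hcon n 0) (hb n))
  have hg : Primrec (fun v : ℕ => if v = f (con 0) then 0 else 1) :=
    Primrec.ite (Primrec.eq.comp Primrec.id (Primrec.const _)) (Primrec.const 0) (Primrec.const 1)
  refine ((TC.of_primrec hg).comp h2 : Rin _ _).congr fun e => ?_
  unfold cp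
  congr 1
  have key : f (b e) = f (con 0) ↔ e ∉ Z := by
    rw [hZ, hf.1.eq_iff]
    constructor
    · intro h z
      rw [← hb, h, hcon]
    · intro h
      apply Subtype.ext
      funext z
      rw [hb, h, hcon]
  change (if f (b e) = f (con 0) then 0 else 1) = ch Z e
  split_ifs with h
  · exact (ch_eq_zero.2 (key.1 h)).symm
  · exact (ch_eq_one.2 (not_not.1 fun h' => h (key.2 h'))).symm

theorem list_bound {α : Type*} (P : ℕ → α → Prop) (hP : ∀ m n a, m ≤ n → P m a → P n a)
    (l : List α) (h : ∀ a ∈ l, ∃ n, P n a) : ∃ n, ∀ a ∈ l, P n a := by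
  induction l with
  | nil => exact ⟨0, by simp⟩
  | cons a l ih =>
    obtain ⟨n, hn⟩ := ih fun b hb => h b (List.mem_cons_of_mem _ hb)
    obtain ⟨m, hm⟩ := h a List.mem_cons_self
    refine ⟨max n m, fun b hb => ?_⟩
    rcases List.mem_cons.1 hb with rfl | hb
    · exact hP _ _ _ (le_max_right _ _) hm
    · exact hP _ _ _ (le_max_left _ _) (hn b hb)

theorem evn_ne {σ : List (ℕ × ℕ)} {k e n : ℕ} (h : evn σ k e n ≠ 0) :
    ∃ m, evn σ k e n = m + 1 := Nat.exists_eq_succ_of_ne_zero h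

theorem mem_jump_iff {X : Set ℕ} {e : ℕ} : e ∈ jump X ↔ ∃ s k, evn (seg X s) k e e ≠ 0 := by
  rw [mem_jump, Part.dom_iff_mem]
  constructor
  · rintro ⟨m, hm⟩
    obtain ⟨s, hs⟩ := mem_ph_iff.1 hm
    obtain ⟨k, hk⟩ := mem_ph_lk.1 hs
    exact ⟨s, k, by omega⟩
  · rintro ⟨s, k, h⟩
    obtain ⟨m, hm⟩ := evn_ne h
    exact ⟨m, mem_ph_iff.2 ⟨s, mem_ph_lk.2 ⟨k, hm⟩⟩⟩

theorem mem_seg {X : Set ℕ} {s : ℕ} : ∀ p ∈ seg X s, p.2 = ch X p.1 := by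
  induction s with
  | zero => simp [seg]
  | succ s ih =>
    intro p hp
    rw [seg] at hp
    rcases List.mem_cons.1 hp with rfl | hp
    · rfl
    · exact ih p hp

theorem mem_of_lookup {σ : List (ℕ × ℕ)} {n m : ℕ} (h : σ.lookup n = some m) : (n, m) ∈ σ := by
  induction σ with
  | nil => simp at h
  | cons p σ ih =>
    obtain ⟨a, b⟩ := p
    rw [List.lookup_cons] at h
    by_cases hn : n = a
    · subst hn
      simp at h
      simp [h]
    · have hb : (n == a) = false := by simpa using hn
      rw [hb] at h
      exact List.mem_cons_of_mem _ (ih h)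

theorem mem_jump_iff' {X : Set ℕ} {e : ℕ} : e ∈ jump X ↔
    ∃ σ k, evn σ k e e ≠ 0 ∧ ∀ p ∈ σ, p.2 = ch X p.1 := by
  constructor
  · intro h
    obtain ⟨s, k, h⟩ := mem_jump_iff.1 h
    exact ⟨_, k, h, mem_seg⟩
  · rintro ⟨σ, k, h, hσ⟩
    obtain ⟨m, hm⟩ := evn_ne h
    rw [mem_jump, Part.dom_iff_mem]
    refine ⟨m, ev_mono (fun n v hv => ?_) _ _ _ (mem_ph_lk.2 ⟨k, hm⟩)⟩
    have := hσ _ (mem_of_lookup (mem_lk.1 hv))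
    rw [cp, Part.mem_some_iff]
    exact this

/-- The matrix of the two-quantifier form of the double jump. -/
def RR (σ : List (ℕ × ℕ)) (k0 e : ℕ) (τ : List (ℕ × ℕ)) (k : ℕ) (τ' : List (ℕ × ℕ)) (k' : ℕ) :
    Prop :=
  evn σ k0 e e ≠ 0 ∧ ∀ p ∈ σ, (p.2 = 1 ∧ evn τ k p.1 p.1 ≠ 0) ∨ (p.2 = 0 ∧ evn τ' k' p.1 p.1 = 0)

theorem mem_jj {X : Set ℕ} {e : ℕ} : e ∈ jump (jump X) ↔
    ∃ σ k0 s k, ∀ s' k', RR σ k0 e (seg X s) k (seg X s') k' := by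
  rw [mem_jump_iff']
  constructor
  · rintro ⟨σ, k0, h0, hσ⟩
    obtain ⟨s, hs⟩ := list_bound
      (fun s (p : ℕ × ℕ) => p.2 = 1 → ∃ m, m ∈ ph (lk (seg X s)) p.1 p.1)
      (fun m n p hmn h hp => (h hp).imp fun _ hv => mem_ph_seg_mono hmn hv) σ (by
        intro p hp
        by_cases h1 : p.2 = 1
        · have : p.1 ∈ jump X := ch_eq_one.1 ((hσ p hp).symm.trans h1)
          obtain ⟨s, k, hk⟩ := mem_jump_iff.1 this
          obtain ⟨m, hm⟩ := evn_ne hk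
          exact ⟨s, fun _ => ⟨m, mem_ph_lk.2 ⟨k, hm⟩⟩⟩
        · exact ⟨0, fun h => absurd h h1⟩)
    obtain ⟨k, hk⟩ := list_bound
      (fun k (p : ℕ × ℕ) => p.2 = 1 → evn (seg X s) k p.1 p.1 ≠ 0)
      (fun m n p hmn h hp => by
        obtain ⟨v, hv⟩ := evn_ne (h hp)
        rw [evn_mono hmn hv]
        omega) σ (by
        intro p hp
        by_cases h1 : p.2 = 1
        · obtain ⟨m, hm⟩ := hs p hp h1
          obtain ⟨k, hk⟩ := mem_ph_lk.1 hm
          exact ⟨k, fun _ => by omega⟩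
        · exact ⟨0, fun h => absurd h h1⟩)
    refine ⟨σ, k0, s, k, fun s' k' => ⟨h0, fun p hp => ?_⟩⟩
    by_cases hj : p.1 ∈ jump X
    · have h1 : p.2 = 1 := (hσ p hp).trans (ch_eq_one.2 hj)
      exact Or.inl ⟨h1, hk p hp h1⟩
    · refine Or.inr ⟨(hσ p hp).trans (ch_eq_zero.2 hj), ?_⟩
      by_contra hne
      exact hj (mem_jump_iff.2 ⟨s', k', hne⟩)
  · rintro ⟨σ, k0, s, k, h⟩
    refine ⟨σ, k0, (h 0 0).1, fun p hp => ?_⟩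
    by_cases hj : p.1 ∈ jump X
    · obtain ⟨s', k', hne⟩ := mem_jump_iff.1 hj
      rcases (h s' k').2 p hp with ⟨h1, _⟩ | ⟨_, h2⟩
      · rw [h1, ch_eq_one.2 hj]
      · exact absurd h2 hne
    · rcases (h 0 0).2 p hp with ⟨_, h2⟩ | ⟨h1, _⟩
      · exact absurd (mem_jump_iff.2 ⟨s, k, h2⟩) hj
      · rw [h1, ch_eq_zero.2 hj]

theorem primrec_RR : PrimrecPred (fun p : (List (ℕ × ℕ) × ℕ × ℕ) × (List (ℕ × ℕ) × ℕ) ×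
    (List (ℕ × ℕ) × ℕ) => RR p.1.1 p.1.2.1 p.1.2.2 p.2.1.1 p.2.1.2 p.2.2.1 p.2.2.2) := by
  have hrel : PrimrecRel (fun (p : ℕ × ℕ) (b : (List (ℕ × ℕ) × ℕ) × (List (ℕ × ℕ) × ℕ)) =>
      (p.2 = 1 ∧ evn b.1.1 b.1.2 p.1 p.1 ≠ 0) ∨ (p.2 = 0 ∧ evn b.2.1 b.2.2 p.1 p.1 = 0)) := by
    have hp1 : Primrec (fun t : (ℕ × ℕ) × (List (ℕ × ℕ) × ℕ) × (List (ℕ × ℕ) × ℕ) => t.1.1) :=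
      Primrec.fst.comp Primrec.fst
    have hp2 : Primrec (fun t : (ℕ × ℕ) × (List (ℕ × ℕ) × ℕ) × (List (ℕ × ℕ) × ℕ) => t.1.2) :=
      Primrec.snd.comp Primrec.fst
    have hb1 : Primrec (fun t : (ℕ × ℕ) × (List (ℕ × ℕ) × ℕ) × (List (ℕ × ℕ) × ℕ) => t.2.1) :=
      Primrec.fst.comp Primrec.snd
    have hb2 : Primrec (fun t : (ℕ × ℕ) × (List (ℕ × ℕ) × ℕ) × (List (ℕ × ℕ) × ℕ) => t.2.2) :=
      Primrec.snd.comp Primrec.snd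
    have he1 := primrec_evn.comp ((Primrec.fst.comp hb1).pair
      ((Primrec.snd.comp hb1).pair (hp1.pair hp1)))
    have he2 := primrec_evn.comp ((Primrec.fst.comp hb2).pair
      ((Primrec.snd.comp hb2).pair (hp1.pair hp1)))
    exact PrimrecPred.or
      (PrimrecPred.and (Primrec.eq.comp hp2 (Primrec.const 1))
        (PrimrecPred.not (Primrec.eq.comp he1 (Primrec.const 0))))
      (PrimrecPred.and (Primrec.eq.comp hp2 (Primrec.const 0))
        (Primrec.eq.comp he2 (Primrec.const 0)))
  have h1 : Primrec (fun p : (List (ℕ × ℕ) × ℕ × ℕ) × (List (ℕ × ℕ) × ℕ) ×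
      (List (ℕ × ℕ) × ℕ) => evn p.1.1 p.1.2.1 p.1.2.2 p.1.2.2) := by
    have ha : Primrec (fun p : (List (ℕ × ℕ) × ℕ × ℕ) × (List (ℕ × ℕ) × ℕ) ×
      (List (ℕ × ℕ) × ℕ) => p.1) := Primrec.fst
    have hb := Primrec.snd.comp ha
    exact primrec_evn.comp ((Primrec.fst.comp ha).pair ((Primrec.fst.comp hb).pair
      ((Primrec.snd.comp hb).pair (Primrec.snd.comp hb))))
  exact PrimrecPred.and (PrimrecPred.not (Primrec.eq.comp h1 (Primrec.const 0)))
    (hrel.forall_mem_list.comp (Primrec.fst.comp Primrec.fst) Primrec.snd)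

theorem exists_RR : ∃ g : (List (ℕ × ℕ) × ℕ × ℕ) × (List (ℕ × ℕ) × ℕ) ×
    (List (ℕ × ℕ) × ℕ) → ℕ, Primrec g ∧ ∀ p, g p ≠ 0 ↔
      RR p.1.1 p.1.2.1 p.1.2.2 p.2.1.1 p.2.1.2 p.2.2.1 p.2.2.2 := by
  classical
  refine ⟨_, Primrec.ite primrec_RR (Primrec.const 1) (Primrec.const 0), fun p => ?_⟩
  simp only [ne_eq, ite_eq_right_iff, one_ne_zero, imp_false, not_not]

theorem exists_matrix (X : Set ℕ) : ∃ D : ℕ → ℕ, TC (cp X) D ∧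
    ∀ e, e ∈ jump (jump X) ↔ ∃ z, ∀ i, D (Nat.pair (Nat.pair e z) i) ≠ 0 := by
  obtain ⟨g, hg, hg'⟩ := exists_RR
  have hpr : Primrec₂ (fun (A c : ℕ) =>
      g ((Denumerable.ofNat (List (ℕ × ℕ)) A.unpair.1.unpair.2.unpair.1,
        A.unpair.1.unpair.2.unpair.2.unpair.1, A.unpair.1.unpair.1),
        (Denumerable.ofNat (List (ℕ × ℕ)) c.unpair.1,
        A.unpair.1.unpair.2.unpair.2.unpair.2.unpair.2),
        (Denumerable.ofNat (List (ℕ × ℕ)) c.unpair.2, A.unpair.2.unpair.2))) := by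
    have hA : Primrec (fun p : ℕ × ℕ => p.1.unpair) := Primrec.unpair.comp Primrec.fst
    have hc : Primrec (fun p : ℕ × ℕ => p.2.unpair) := Primrec.unpair.comp Primrec.snd
    have hA1 := Primrec.unpair.comp (Primrec.fst.comp hA)
    have hA2 := Primrec.unpair.comp (Primrec.snd.comp hA)
    have hA12 := Primrec.unpair.comp (Primrec.snd.comp hA1)
    have hA122 := Primrec.unpair.comp (Primrec.snd.comp hA12)
    have hA1222 := Primrec.unpair.comp (Primrec.snd.comp hA122)
    have ho : Primrec (Denumerable.ofNat (List (ℕ × ℕ))) := Primrec.ofNat _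
    have hx : Primrec (fun p : ℕ × ℕ => (Denumerable.ofNat (List (ℕ × ℕ))
        p.1.unpair.1.unpair.2.unpair.1, p.1.unpair.1.unpair.2.unpair.2.unpair.1,
        p.1.unpair.1.unpair.1)) :=
      (ho.comp (Primrec.fst.comp hA12)).pair ((Primrec.fst.comp hA122).pair
        (Primrec.fst.comp hA1))
    have hy : Primrec (fun p : ℕ × ℕ => (Denumerable.ofNat (List (ℕ × ℕ)) p.2.unpair.1,
        p.1.unpair.1.unpair.2.unpair.2.unpair.2.unpair.2)) :=
      (ho.comp (Primrec.fst.comp hc)).pair (Primrec.snd.comp hA1222)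
    have hz : Primrec (fun p : ℕ × ℕ => (Denumerable.ofNat (List (ℕ × ℕ)) p.2.unpair.2,
        p.1.unpair.2.unpair.2)) :=
      (ho.comp (Primrec.snd.comp hc)).pair (Primrec.snd.comp hA2)
    exact hg.comp (hx.pair (hy.pair hz))
  have hseg : TC (cp X) (fun A => Nat.pair
      (Encodable.encode (seg X A.unpair.1.unpair.2.unpair.2.unpair.2.unpair.1))
      (Encodable.encode (seg X A.unpair.2.unpair.1))) :=
    ((TC.seg X).comp (TC.fst.comp (TC.snd.comp (TC.snd.comp (TC.snd.comp TC.fst))))).pair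
      ((TC.seg X).comp (TC.fst.comp TC.snd))
  refine ⟨_, TC.comp₂ hpr TC.id hseg, fun e => ?_⟩
  rw [mem_jj]
  simp only [hg', Nat.unpair_pair, Denumerable.ofNat_encode]
  constructor
  · rintro ⟨σ, k0, s, k, h⟩
    refine ⟨Nat.pair (Encodable.encode σ) (Nat.pair k0 (Nat.pair s k)), fun i => ?_⟩
    simpa only [Nat.unpair_pair, Denumerable.ofNat_encode] using h i.unpair.1 i.unpair.2
  · rintro ⟨z, h⟩
    refine ⟨Denumerable.ofNat (List (ℕ × ℕ)) z.unpair.1, z.unpair.2.unpair.1,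
      z.unpair.2.unpair.2.unpair.1, z.unpair.2.unpair.2.unpair.2, fun s' k' => ?_⟩
    simpa only [Nat.unpair_pair] using h (Nat.pair s' k')

theorem exists_B (X : Set ℕ) : ∃ B : ℕ → Part ℕ, Rin (cp X) B ∧
    ∀ e, e ∉ jump (jump X) ↔ ∀ z, B (Nat.pair e z) = Part.some 0 := by
  obtain ⟨D, hD, hD'⟩ := exists_matrix X
  refine ⟨_, rec_comp (TC.const 0) (rec_find hD), fun e => ?_⟩
  rw [hD']
  push Not
  refine forall_congr' fun z => ?_
  rw [← find_tot_dom (d := fun i => D (Nat.pair (Nat.pair e z) i))]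
  constructor
  · intro h
    obtain ⟨v, hv⟩ := Part.dom_iff_mem.1 h
    rw [Part.eq_some_iff.2 hv, Part.bind_some]
  · intro h
    by_contra hn
    rw [Part.eq_none_iff'.2 hn, Part.bind_none] at h
    exact Part.some_ne_none _ h.symm

theorem stmt15 (X Y : Set ℕ) :
    (∃ f : Bel X → ℕ, IsPCAEmbedding (bXApp X) (k1App Y) f) ↔
      TuringLE (jump (jump X)) Y := by
  constructor
  · rintro ⟨f, hf⟩
    obtain ⟨B, hB, hB'⟩ := exists_B X
    exact recursiveIn_iff.2 (le_of_emb hf hB hB')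
  · intro h
    exact exists_emb (recursiveIn_iff.1 h)

end PCAEmb
end

section
/- There is an embedding of pcas of van Oosten's model B into Scott's graph model G which, for every X ⊆ ω, restricts to an embedding of B^X into G^{X ⊕ X̄}, where X̄ is the complement of X. -/
namespace PCAEmb

/-! ### Compactness (continuity) of predicates of partial functions -/

/-- `P` is determined by finite subfunctions. -/
def Cpt (P : (ℕ →. ℕ) → Prop) : Prop :=
  ∀ O, P O → ∃ L : Finset (ℕ × ℕ), (∀ p ∈ L, p.2 ∈ O p.1) ∧
    ∀ O' : ℕ →. ℕ, (∀ p ∈ L, p.2 ∈ O' p.1) → P O'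

theorem Cpt.mono {P} (h : Cpt P) {O O' : ℕ →. ℕ} (hO : ∀ x y, y ∈ O x → y ∈ O' x) (hP : P O) :
    P O' := by
  obtain ⟨L, h1, h2⟩ := h O hP
  exact h2 O' fun p hp => hO _ _ (h1 p hp)

theorem Cpt.const (p : Prop) : Cpt (fun _ => p) := fun _ h => ⟨∅, by simp, fun _ _ => h⟩

theorem Cpt.and {P Q} (hP : Cpt P) (hQ : Cpt Q) : Cpt (fun O => P O ∧ Q O) := by
  classical
  rintro O ⟨h, h'⟩
  obtain ⟨L, h1, h2⟩ := hP O h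
  obtain ⟨L', h1', h2'⟩ := hQ O h'
  refine ⟨L ∪ L', fun p hp => ?_, fun O' hO' => ⟨h2 O' fun p hp => hO' p ?_,
    h2' O' fun p hp => hO' p ?_⟩⟩
  · rcases Finset.mem_union.1 hp with hp | hp
    exacts [h1 p hp, h1' p hp]
  · exact Finset.mem_union_left _ hp
  · exact Finset.mem_union_right _ hp

theorem Cpt.exist {ι : Type*} {P : ι → (ℕ →. ℕ) → Prop} (hP : ∀ i, Cpt (P i)) :
    Cpt (fun O => ∃ i, P i O) := by
  rintro O ⟨i, h⟩
  obtain ⟨L, h1, h2⟩ := hP i O h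
  exact ⟨L, h1, fun O' hO' => ⟨i, h2 O' hO'⟩⟩

theorem Cpt.ball {ι : Type*} {P : ι → (ℕ →. ℕ) → Prop} (hP : ∀ i, Cpt (P i)) (S : Finset ι) :
    Cpt (fun O => ∀ i ∈ S, P i O) := by
  classical
  induction S using Finset.induction_on with
  | empty => intro O _; exact ⟨∅, by simp, by simp⟩
  | insert a s ha ih =>
    have := (hP a).and ih
    simpa only [Finset.forall_mem_insert] using this

theorem Cpt.comp {P} (hP : Cpt P) {Φ : (ℕ →. ℕ) → (ℕ →. ℕ)}
    (hΦ : ∀ x y, Cpt (fun O => y ∈ Φ O x)) : Cpt (fun O => P (Φ O)) := by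
  intro O h
  obtain ⟨L, h1, h2⟩ := hP _ h
  obtain ⟨M, h3, h4⟩ := Cpt.ball (P := fun (p : ℕ × ℕ) O => p.2 ∈ Φ O p.1)
    (fun p => hΦ p.1 p.2) L O h1
  exact ⟨M, h3, fun O' hO' => h2 _ (h4 O' hO')⟩

theorem Cpt.mem (x y : ℕ) : Cpt (fun O => y ∈ O x) :=
  fun O h => ⟨{(x, y)}, by simpa using h, fun O' h' => by simpa using h'⟩

theorem cpt_evalo (c : OCode) : ∀ x y, Cpt (fun O => y ∈ evalo O c x) := by
  induction c with
  | zero => intro x y; simp only [evalo]; exact Cpt.const _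
  | succ => intro x y; simp only [evalo]; exact Cpt.const _
  | left => intro x y; simp only [evalo]; exact Cpt.const _
  | right => intro x y; simp only [evalo]; exact Cpt.const _
  | oracle => intro x y; exact Cpt.mem x y
  | pair cf cg hf hg =>
    intro x y
    have : Cpt (fun O => ∃ a b, (a ∈ evalo O cf x ∧ b ∈ evalo O cg x) ∧
        Nat.pair a b = y) :=
      Cpt.exist fun a => Cpt.exist fun b => ((hf _ _).and (hg _ _)).and (Cpt.const _)
    convert this using 2 with O
    simp only [evalo, Seq.seq]
    simp [and_assoc]
  | comp cf cg hf hg =>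
    intro x y
    have : Cpt (fun O => ∃ a, a ∈ evalo O cg x ∧ y ∈ evalo O cf a) :=
      Cpt.exist fun a => (hg _ _).and (hf _ _)
    convert this using 2 with O
    simp only [evalo]
    exact Part.mem_bind_iff
  | prec cf cg hf hg =>
    intro x y
    simp only [evalo, Nat.unpaired]
    generalize x.unpair.2 = n
    induction n generalizing y with
    | zero => exact hf _ _
    | succ n ih =>
      have : Cpt (fun O => ∃ i, i ∈ (Nat.rec (evalo O cf x.unpair.1) (fun y IH => do
          let i ← IH
          evalo O cg (Nat.pair x.unpair.1 (Nat.pair y i))) n : Part ℕ) ∧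
          y ∈ evalo O cg (Nat.pair x.unpair.1 (Nat.pair n i))) :=
        Cpt.exist fun i => (ih i).and (hg _ _)
      convert this using 2 with O
      simp
  | rfind' cf hf =>
    intro x y
    have : Cpt (fun O => ∃ n, (0 ∈ evalo O cf (Nat.pair x.unpair.1 (n + x.unpair.2)) ∧
        ∀ m ∈ Finset.range n, ∃ z,
          z ∈ evalo O cf (Nat.pair x.unpair.1 (m + x.unpair.2)) ∧ z ≠ 0) ∧
        n + x.unpair.2 = y) :=
      Cpt.exist fun n => ((hf _ _).and (Cpt.ball (fun m => Cpt.exist fun z =>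
        (hf _ _).and (Cpt.const _)) _)).and (Cpt.const _)
    convert this using 2 with O
    simp only [evalo, Nat.unpaired, Part.mem_map_iff, Part.map_eq_map]
    refine exists_congr fun n => and_congr_left' (Nat.mem_rfind.trans ?_)
    simp

theorem cpt_pjoin_left (ρ : ℕ →. ℕ) (x y : ℕ) : Cpt (fun θ => y ∈ pjoin θ ρ x) := by
  unfold pjoin
  split_ifs
  · exact Cpt.mem _ _
  · exact Cpt.const _

theorem cpt_pjoin_right (θ : ℕ →. ℕ) (x y : ℕ) : Cpt (fun ρ => y ∈ pjoin θ ρ x) := by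
  unfold pjoin
  split_ifs
  · exact Cpt.const _
  · exact Cpt.mem _ _

/-- Total application in `B`. -/
def bap (θ ρ : ℕ →. ℕ) : ℕ →. ℕ := fun n => (θ 0).bind fun e => phi (pjoin θ ρ) e n

theorem cpt_bap_left (ρ : ℕ →. ℕ) (x y : ℕ) : Cpt (fun θ => y ∈ bap θ ρ x) := by
  simp only [bap, Part.mem_bind_iff]
  exact Cpt.exist fun e => (Cpt.mem _ _).and
    (Cpt.comp (Φ := fun θ => pjoin θ ρ) (cpt_evalo _ _ _) (cpt_pjoin_left ρ))

theorem cpt_bap_right (θ : ℕ →. ℕ) (x y : ℕ) : Cpt (fun ρ => y ∈ bap θ ρ x) := by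
  simp only [bap, Part.mem_bind_iff]
  exact Cpt.exist fun e => (Cpt.const _).and
    (Cpt.comp (Φ := fun ρ => pjoin θ ρ) (cpt_evalo _ _ _) (cpt_pjoin_right θ))

/-! ### The embedding -/

/-- The token for `θ x = y`. -/
def tok (x y : ℕ) : ℕ := Nat.pair (Nat.pair x y) 1

/-- The finite partial function coded by `u`. -/
def rho (u : ℕ) : ℕ →. ℕ := fun x => Nat.rfind fun y => Part.some (u.testBit (tok x y))

/-- The embedding, as an inductive predicate. -/
inductive FT : (ℕ →. ℕ) → ℕ → Prop
  | graph (θ : ℕ →. ℕ) (x y : ℕ) : y ∈ θ x → FT θ (tok x y)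
  | fn (θ : ℕ →. ℕ) (m u : ℕ) : u ≠ 1 → FT (bap θ (rho u)) m → FT θ (Nat.pair m u)

theorem FT_pair (θ : ℕ →. ℕ) (m u : ℕ) (hu : u ≠ 1) :
    FT θ (Nat.pair m u) ↔ FT (bap θ (rho u)) m := by
  constructor
  · intro h
    generalize ht : Nat.pair m u = t at h
    cases h with
    | graph _ x y h => exact absurd (Nat.pair_eq_pair.1 ht).2 hu
    | fn _ m' u' hu' h =>
      obtain ⟨rfl, rfl⟩ := Nat.pair_eq_pair.1 ht
      exact h
  · exact FT.fn θ m u hu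

theorem FT_pair_one (θ : ℕ →. ℕ) (m : ℕ) :
    FT θ (Nat.pair m 1) ↔ m.unpair.2 ∈ θ m.unpair.1 := by
  constructor
  · intro h
    generalize ht : Nat.pair m 1 = t at h
    cases h with
    | graph _ x y h =>
      obtain ⟨rfl, _⟩ := Nat.pair_eq_pair.1 ht
      simpa using h
    | fn _ m' u' hu' h => exact absurd (Nat.pair_eq_pair.1 ht).2.symm hu'
  · intro h
    have := FT.graph θ _ _ h
    simpa [tok] using this

theorem FT_tok (θ : ℕ →. ℕ) (x y : ℕ) : FT θ (tok x y) ↔ y ∈ θ x := by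
  simp [tok, FT_pair_one]

theorem tok_ne_zero (x y : ℕ) : tok x y ≠ 0 := by
  have := Nat.right_le_pair (Nat.pair x y) 1
  unfold tok; omega

theorem FT_zero (θ : ℕ →. ℕ) : ¬ FT θ 0 := by
  intro h
  generalize ht : 0 = t at h
  induction h with
  | graph θ x y h => exact tok_ne_zero x y ht.symm
  | fn θ m u hu h ih =>
    have := Nat.left_le_pair m u
    exact ih (by omega)

theorem cpt_FT (t : ℕ) : Cpt (fun θ => FT θ t) := by
  induction t using Nat.strong_induction_on with
  | _ t ih =>
    rcases Nat.eq_zero_or_pos t with rfl | ht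
    · intro O h; exact absurd h (FT_zero O)
    have h1 := Nat.unpair_lt ht
    rw [← Nat.pair_unpair t]
    generalize t.unpair.1 = m at *
    generalize t.unpair.2 = u at *
    by_cases hu : u = 1
    · subst hu
      simp only [FT_pair_one]
      exact Cpt.mem _ _
    · simp only [FT_pair _ _ _ hu]
      exact Cpt.comp (Φ := fun θ => bap θ (rho u)) (ih m h1) (cpt_bap_left _)

theorem exists_code_finset (S : Finset ℕ) : ∃ u : ℕ, ∀ k, u.testBit k = true ↔ k ∈ S := by
  classical
  induction S using Finset.induction_on with
  | empty => exact ⟨0, by simp⟩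
  | insert a s ha ih =>
    obtain ⟨u, hu⟩ := ih
    refine ⟨u ||| 2 ^ a, fun k => ?_⟩
    simp only [Nat.testBit_or, Bool.or_eq_true, hu, Nat.testBit_two_pow, decide_eq_true_eq,
      Finset.mem_insert]
    tauto

theorem mem_rho_testBit {u x y : ℕ} (h : y ∈ rho u x) : u.testBit (tok x y) = true := by
  have := Nat.rfind_spec h
  exact (Part.mem_some_iff.1 this).symm

theorem tok_inj {x y x' y' : ℕ} (h : tok x y = tok x' y') : x = x' ∧ y = y' :=
  Nat.pair_eq_pair.1 (Nat.pair_eq_pair.1 h).1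

theorem FT_app (θ ρ : ℕ →. ℕ) (n : ℕ) :
    FT (bap θ ρ) n ↔ ∃ u, FT θ (Nat.pair n u) ∧ Du u ⊆ {t | FT ρ t} := by
  classical
  constructor
  · intro h
    obtain ⟨L, h1, h2⟩ := Cpt.comp (Φ := fun ρ => bap θ ρ) (cpt_FT n) (cpt_bap_right θ) ρ h
    obtain ⟨u, hu⟩ := exists_code_finset (L.image fun p => tok p.1 p.2)
    have hbit : ∀ x y, u.testBit (tok x y) = true ↔ (x, y) ∈ L := by
      intro x y
      rw [hu, Finset.mem_image]
      constructor
      · rintro ⟨⟨a, b⟩, hp, he⟩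
        obtain ⟨rfl, rfl⟩ := tok_inj he
        exact hp
      · intro hp; exact ⟨_, hp, rfl⟩
    have hu1 : u ≠ 1 := by
      rintro rfl
      have := (hu 0).1 (by simp)
      obtain ⟨p, _, hp⟩ := Finset.mem_image.1 this
      exact tok_ne_zero _ _ hp
    refine ⟨u, FT.fn _ _ _ hu1 (h2 _ ?_), ?_⟩
    · rintro ⟨x, y⟩ hp
      refine Nat.mem_rfind.2 ⟨?_, ?_⟩
      · exact Part.mem_some_iff.2 ((hbit x y).2 hp).symm
      · intro m hm
        have : ¬ u.testBit (tok x m) = true := by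
          intro hb
          have e := Part.mem_unique (h1 (x, m) ((hbit x m).1 hb)) (h1 (x, y) hp)
          simp only at e
          omega
        exact Part.mem_some_iff.2 (Bool.eq_false_iff.2 this).symm
    · intro k hk
      obtain ⟨p, hp, rfl⟩ := Finset.mem_image.1 ((hu k).1 hk)
      exact FT.graph _ _ _ (h1 p hp)
  · rintro ⟨u, h, hD⟩
    by_cases hu : u = 1
    · subst hu
      exact absurd (hD (show (0 : ℕ) ∈ Du 1 by simp [Du])) (FT_zero ρ)
    · rw [FT_pair _ _ _ hu] at h
      refine Cpt.mono (Cpt.comp (Φ := fun ρ => bap θ ρ) (cpt_FT n) (cpt_bap_right θ)) ?_ h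
      intro x y hy
      exact (FT_tok _ _ _).1 (hD (mem_rho_testBit hy))

theorem FT_inj : Function.Injective (fun θ : ℕ →. ℕ => {t | FT θ t}) := by
  intro θ θ' h
  funext x
  refine Part.ext fun y => ?_
  rw [← FT_tok, ← FT_tok]
  exact Set.ext_iff.1 h _

/-! ### Effectiveness -/

open Nat.Partrec (Code)

/-- Compile an oracle code, given a code for the oracle. -/
def compile (d : Code) : OCode → Code
  | .zero => .zero
  | .succ => .succ
  | .left => .left
  | .right => .right
  | .oracle => d
  | .pair a b => .pair (compile d a) (compile d b)
  | .comp a b => .comp (compile d a) (compile d b)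
  | .prec a b => .prec (compile d a) (compile d b)
  | .rfind' a => .rfind' (compile d a)

theorem eval_compile (d : Code) (c : OCode) : (compile d c).eval = evalo d.eval c := by
  induction c with
  | zero | succ | left | right | oracle => simp only [compile, evalo, Code.eval]
  | pair a b ha hb => simp only [compile, evalo, Code.eval, ha, hb]; rfl
  | comp a b ha hb => simp only [compile, evalo, Code.eval, ha, hb]; rfl
  | prec a b ha hb => simp only [compile, evalo, Code.eval, ha, hb]; rfl
  | rfind' a ha => simp only [compile, evalo, Code.eval, ha]; rfl

/-- Every code is an oracle code. -/
def toO : Code → OCode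
  | .zero => .zero
  | .succ => .succ
  | .left => .left
  | .right => .right
  | .pair a b => .pair (toO a) (toO b)
  | .comp a b => .comp (toO a) (toO b)
  | .prec a b => .prec (toO a) (toO b)
  | .rfind' a => .rfind' (toO a)

theorem evalo_toO (O : ℕ →. ℕ) (c : Code) : evalo O (toO c) = c.eval := by
  induction c with
  | zero | succ | left | right => simp only [toO, evalo, Code.eval]
  | pair a b ha hb => simp only [toO, evalo, Code.eval, ha, hb]; rfl
  | comp a b ha hb => simp only [toO, evalo, Code.eval, ha, hb]; rfl
  | prec a b ha hb => simp only [toO, evalo, Code.eval, ha, hb]; rfl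
  | rfind' a ha => simp only [toO, evalo, Code.eval, ha]; rfl

theorem primrec_compile (c : OCode) : Primrec fun d => compile d c := by
  induction c with
  | zero | succ | left | right => simp only [compile]; exact Primrec.const _
  | oracle => simp only [compile]; exact Primrec.id
  | pair a b ha hb => simp only [compile]; exact Code.primrec₂_pair.comp ha hb
  | comp a b ha hb => simp only [compile]; exact Code.primrec₂_comp.comp ha hb
  | prec a b ha hb => simp only [compile]; exact Code.primrec₂_prec.comp ha hb
  | rfind' a ha => simp only [compile]; exact Code.primrec_rfind'.comp ha

/-- One step of the course-of-values recursion computing `compile d (OCode.ofNat n)`. -/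
def compStep (d : Code) (L : List Code) : Option Code :=
  if L.length = 0 then some .zero else
  if L.length = 1 then some .succ else
  if L.length = 2 then some .left else
  if L.length = 3 then some .right else
  if L.length = 4 then some d else
    (L[((L.length - 5) / 4).unpair.1]?).bind fun a =>
      (L[((L.length - 5) / 4).unpair.2]?).bind fun b =>
        if (L.length - 5) % 4 = 0 then some (.pair a b) else
        if (L.length - 5) % 4 = 1 then some (.comp a b) else
        if (L.length - 5) % 4 = 2 then some (.prec a b) else some (.rfind' a)

theorem primrec_compStep : Primrec₂ compStep := by
  have hl : Primrec fun p : Code × List Code => p.2.length := Primrec.list_length.comp Primrec.snd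
  have heq : ∀ k : ℕ, PrimrecPred fun p : Code × List Code => p.2.length = k := fun k =>
    PrimrecRel.comp Primrec.eq hl (Primrec.const k)
  have hm : Primrec fun p : Code × List Code => p.2.length - 5 :=
    Primrec.nat_sub.comp hl (Primrec.const 5)
  have hq : Primrec fun p : Code × List Code => ((p.2.length - 5) / 4).unpair :=
    Primrec.unpair.comp (Primrec.nat_div.comp hm (Primrec.const 4))
  have hr : Primrec fun p : Code × List Code => ((p.2.length - 5) % 4) :=
    Primrec.nat_mod.comp hm (Primrec.const 4)
  have hreq : ∀ k : ℕ, PrimrecPred fun p : ((Code × List Code) × Code) × Code =>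
      (p.1.1.2.length - 5) % 4 = k := fun k =>
    PrimrecRel.comp Primrec.eq (hr.comp (Primrec.fst.comp Primrec.fst)) (Primrec.const k)
  have ha : Primrec fun p : ((Code × List Code) × Code) × Code => p.1.2 :=
    Primrec.snd.comp Primrec.fst
  have hb : Primrec fun p : ((Code × List Code) × Code) × Code => p.2 := Primrec.snd
  unfold compStep
  refine Primrec.ite (heq 0) (Primrec.const _) <| Primrec.ite (heq 1) (Primrec.const _) <|
    Primrec.ite (heq 2) (Primrec.const _) <| Primrec.ite (heq 3) (Primrec.const _) <|
    Primrec.ite (heq 4) (Primrec.option_some.comp Primrec.fst) <|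
    Primrec.option_bind (Primrec.list_getElem?.comp Primrec.snd (Primrec.fst.comp hq))
      (Primrec.option_bind (Primrec.list_getElem?.comp (Primrec.snd.comp Primrec.fst)
        (Primrec.snd.comp (hq.comp Primrec.fst))) ?_)
  exact Primrec.ite (hreq 0) (Primrec.option_some.comp (Code.primrec₂_pair.comp ha hb)) <|
    Primrec.ite (hreq 1) (Primrec.option_some.comp (Code.primrec₂_comp.comp ha hb)) <|
    Primrec.ite (hreq 2) (Primrec.option_some.comp (Code.primrec₂_prec.comp ha hb)) <|
    Primrec.option_some.comp (Code.primrec_rfind'.comp ha)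

theorem compStep_spec (d : Code) (n : ℕ) :
    compStep d ((List.range n).map fun e => compile d (OCode.ofNat e)) =
      some (compile d (OCode.ofNat n)) := by
  rcases n with _ | _ | _ | _ | _ | n
  iterate 5 simp [compStep, OCode.ofNat, compile]
  have h1 := Nat.unpair_left_le (n / 4)
  have h2 := Nat.unpair_right_le (n / 4)
  have h3 := Nat.div_le_self n 4
  have h4 : (n / 4).unpair.1 < n + 5 := by omega
  have h5 : (n / 4).unpair.2 < n + 5 := by omega
  have h6 : n % 4 = 0 ∨ n % 4 = 1 ∨ n % 4 = 2 ∨ n % 4 = 3 := by omega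
  rw [OCode.ofNat]
  rcases h6 with h | h | h | h <;>
    simp [compStep, h, h4, h5, compile]

theorem primrec_compN : Primrec₂ fun (d : Code) (e : ℕ) => compile d (OCode.ofNat e) :=
  Primrec.nat_strong_rec _ primrec_compStep compStep_spec

/-- The s-m-n theorem, for arbitrary parameters. -/
theorem smn' {α : Type*} [Primcodable α] {f : α → ℕ →. ℕ} (hf : Partrec₂ f) :
    ∃ s : α → Code, Computable s ∧ ∀ a, (s a).eval = f a := by
  obtain ⟨cg, eg⟩ := Code.exists_code.1 hf
  refine ⟨fun a => cg.curry (Encodable.encode a),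
    (Code.primrec₂_curry.comp (Primrec.const cg) Primrec.encode).to_comp, fun a => ?_⟩
  funext x
  rw [Code.eval_curry, eg]
  simp [Part.map_id']

theorem primrec_testBit : Primrec₂ Nat.testBit := by
  have hpow : Primrec₂ (fun a b : ℕ => a ^ b) := Primrec₂.unpaired'.1 Nat.Primrec.pow
  have : Primrec₂ fun a b : ℕ => decide (a / 2 ^ b % 2 = 1) := by
    refine PrimrecPred.decide ?_
    exact PrimrecRel.comp Primrec.eq (Primrec.nat_mod.comp (Primrec.nat_div.comp Primrec.fst
      (hpow.comp (Primrec.const 2) Primrec.snd)) (Primrec.const 2)) (Primrec.const 1)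
  refine this.of_eq fun a b => ?_
  rw [Nat.testBit_eq_decide_div_mod_eq]

theorem primrec_tok : Primrec₂ tok :=
  Primrec₂.natPair.comp (Primrec₂.natPair.comp Primrec.fst Primrec.snd) (Primrec.const 1)

theorem partrec_rho : Partrec₂ rho := by
  refine Partrec.rfind (Computable.partrec ?_)
  exact (primrec_testBit.comp (Primrec.fst.comp Primrec.fst)
    (primrec_tok.comp (Primrec.snd.comp Primrec.fst) Primrec.snd)).to_comp

theorem exists_join : ∃ s : Code × ℕ → Code, Computable s ∧
    ∀ p, (s p).eval = pjoin p.1.eval (rho p.2) := by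
  refine smn' ?_
  have hx : Computable fun q : (Code × ℕ) × ℕ => q.2 / 2 :=
    (Primrec.nat_div.comp Primrec.snd (Primrec.const 2)).to_comp
  have hc : Computable fun q : (Code × ℕ) × ℕ => decide (q.2 % 2 = 0) :=
    (PrimrecPred.decide (PrimrecRel.comp Primrec.eq
      (Primrec.nat_mod.comp Primrec.snd (Primrec.const 2)) (Primrec.const 0))).to_comp
  have h1 := Code.eval_part.comp (Computable.fst.comp Computable.fst) hx
  have h2 := partrec_rho.comp (Computable.snd.comp Computable.fst) hx
  refine (Partrec.cond hc h1 h2).of_eq fun q => ?_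
  unfold pjoin
  by_cases h : q.2 % 2 = 0 <;> simp [h]

theorem exists_app_s17 : ∃ s : Code × ℕ → Code, Computable s ∧
    ∀ p, (s p).eval = bap p.1.eval (rho p.2) := by
  obtain ⟨j, hj, hj'⟩ := exists_join
  refine smn' ?_
  have h1 : Partrec fun q : (Code × ℕ) × ℕ => q.1.1.eval 0 :=
    Code.eval_part.comp (Computable.fst.comp Computable.fst) (Computable.const 0)
  have h2 : Partrec₂ fun (q : (Code × ℕ) × ℕ) (e : ℕ) =>
      (compile (j q.1) (OCode.ofNat e)).eval q.2 :=
    Code.eval_part.comp (primrec_compN.to_comp.comp (hj.comp (Computable.fst.comp Computable.fst))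
      Computable.snd) (Computable.snd.comp Computable.fst)
  refine (Partrec.bind h1 h2).of_eq fun q => ?_
  simp only [eval_compile, hj', bap, phi]

theorem re_FT : ∃ f : ℕ × Code →. Unit, Partrec f ∧ ∀ t d, FT d.eval t ↔ (f (t, d)).Dom := by
  obtain ⟨s, hs, hs'⟩ := exists_app_s17
  let f : ℕ × Code →. Unit ⊕ (ℕ × Code) := fun p =>
    cond (decide (p.1 = 0)) Part.none <|
    cond (decide (p.1.unpair.2 = 1))
      ((p.2.eval p.1.unpair.1.unpair.1).bind fun y =>
        cond (decide (y = p.1.unpair.1.unpair.2)) (Part.some (Sum.inl ())) Part.none)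
      (Part.some (Sum.inr (p.1.unpair.1, s (p.2, p.1.unpair.2))))
  have hf : Partrec f := by
    have ht : Primrec fun p : ℕ × Code => p.1 := Primrec.fst
    have hm : Primrec fun p : ℕ × Code => p.1.unpair.1 := Primrec.fst.comp (Primrec.unpair.comp ht)
    have hu : Primrec fun p : ℕ × Code => p.1.unpair.2 := Primrec.snd.comp (Primrec.unpair.comp ht)
    have hx : Primrec fun p : ℕ × Code => p.1.unpair.1.unpair.1 :=
      Primrec.fst.comp (Primrec.unpair.comp hm)
    have hy : Primrec fun p : ℕ × Code => p.1.unpair.1.unpair.2 :=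
      Primrec.snd.comp (Primrec.unpair.comp hm)
    refine Partrec.cond (PrimrecPred.decide (PrimrecRel.comp Primrec.eq ht
      (Primrec.const 0))).to_comp Partrec.none ?_
    refine Partrec.cond (PrimrecPred.decide (PrimrecRel.comp Primrec.eq hu
      (Primrec.const 1))).to_comp ?_ ?_
    · refine Partrec.bind (Code.eval_part.comp Computable.snd hx.to_comp) ?_
      refine Partrec.cond (PrimrecPred.decide (PrimrecRel.comp Primrec.eq Primrec.snd
        (hy.comp Primrec.fst))).to_comp (Computable.const _) Partrec.none
    · exact Computable.partrec (Computable.sumInr.comp (hm.to_comp.pair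
        (hs.comp (Computable.snd.pair hu.to_comp))))
  refine ⟨PFun.fix f, Partrec.fix hf, fun t => ?_⟩
  induction t using Nat.strong_induction_on with
  | _ t ih =>
    intro d
    rw [Part.dom_iff_mem]
    rcases Nat.eq_zero_or_pos t with rfl | ht
    · simp only [FT_zero, false_iff]
      rintro ⟨y, hy⟩
      rw [PFun.mem_fix_iff] at hy
      simp [f] at hy
    have ht0 : t ≠ 0 := by omega
    have h1 := Nat.unpair_lt ht
    by_cases hu : t.unpair.2 = 1
    · have e : FT d.eval t ↔ t.unpair.1.unpair.2 ∈ d.eval t.unpair.1.unpair.1 := by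
        rw [← FT_pair_one, ← hu, Nat.pair_unpair]
      rw [e]
      have hfe : f (t, d) = ((d.eval t.unpair.1.unpair.1).bind fun y =>
        cond (decide (y = t.unpair.1.unpair.2)) (Part.some (Sum.inl ())) Part.none) := by
        simp [f, ht0, hu]
      constructor
      · intro h
        refine ⟨(), PFun.mem_fix_iff.2 (Or.inl ?_)⟩
        rw [hfe]
        exact Part.mem_bind_iff.2 ⟨_, h, by simp⟩
      · rintro ⟨y, hy⟩
        have key : ∀ z, z ∈ f (t, d) →
            t.unpair.1.unpair.2 ∈ d.eval t.unpair.1.unpair.1 := by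
          intro z hz
          rw [hfe] at hz
          obtain ⟨w, hw, hz⟩ := Part.mem_bind_iff.1 hz
          by_cases hwe : w = t.unpair.1.unpair.2
          · rwa [← hwe]
          · simp [hwe] at hz
        rcases PFun.mem_fix_iff.1 hy with h | ⟨a, h, _⟩
        · exact key _ h
        · exact key _ h
    · have e : FT d.eval t ↔ FT (bap d.eval (rho t.unpair.2)) t.unpair.1 := by
        rw [← FT_pair _ _ _ hu, Nat.pair_unpair]
      have hfe : Sum.inr (t.unpair.1, s (d, t.unpair.2)) ∈ f (t, d) := by
        simp [f, ht0, hu]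
      have h2 := hs' (d, t.unpair.2)
      simp only at h2
      rw [e, ← h2, ih _ h1, PFun.fix_fwd_eq hfe, Part.dom_iff_mem]

/-- The finite part of a characteristic function coded by `u`. -/
def sig (u : ℕ) : ℕ →. ℕ := fun n => Nat.rfind fun y => Part.some
  ((decide (y = 0) && u.testBit (2 * n + 1)) || (decide (y = 1) && u.testBit (2 * n)))

theorem partrec_sig : Partrec₂ sig := by
  refine Partrec.rfind (Computable.partrec ?_)
  have hu : Primrec fun q : (ℕ × ℕ) × ℕ => q.1.1 := Primrec.fst.comp Primrec.fst
  have hn : Primrec fun q : (ℕ × ℕ) × ℕ => 2 * q.1.2 :=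
    Primrec.nat_mul.comp (Primrec.const 2) (Primrec.snd.comp Primrec.fst)
  have heq : ∀ k : ℕ, Primrec fun q : (ℕ × ℕ) × ℕ => decide (q.2 = k) := fun k =>
    PrimrecPred.decide (PrimrecRel.comp Primrec.eq Primrec.snd (Primrec.const k))
  exact (Primrec.or.comp (Primrec.and.comp (heq 0) (primrec_testBit.comp hu
    (Primrec.succ.comp hn))) (Primrec.and.comp (heq 1) (primrec_testBit.comp hu hn))).to_comp

theorem ce_of_partrec {f : ℕ →. Unit} (hf : Partrec f) (Y : Set ℕ) :
    CE1In Y {n | (f n).Dom} := by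
  have : Partrec fun n => (f n).map fun _ => (0 : ℕ) :=
    hf.map (Computable.const 0).to₂
  obtain ⟨c, hc⟩ := Code.exists_code.1 (Partrec.nat_iff.1 this)
  refine ⟨toO c, fun n => ?_⟩
  rw [evalo_toO, hc]
  rfl

theorem mem_chi {X : Set ℕ} {x y : ℕ} :
    y ∈ chi X x ↔ (y = 1 ∧ x ∈ X) ∨ (y = 0 ∧ x ∉ X) := by
  by_cases h : x ∈ X <;> simp [chi, h]

theorem even_mem_joinCompl {X : Set ℕ} {n : ℕ} : 2 * n ∈ joinCompl X ↔ n ∈ X := by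
  constructor
  · rintro ⟨m, ⟨h, h'⟩ | ⟨h, h'⟩⟩
    · obtain rfl : n = m := by omega
      exact h'
    · omega
  · intro h; exact ⟨n, Or.inl ⟨rfl, h⟩⟩

theorem odd_mem_joinCompl {X : Set ℕ} {n : ℕ} : 2 * n + 1 ∈ joinCompl X ↔ n ∉ X := by
  constructor
  · rintro ⟨m, ⟨h, h'⟩ | ⟨h, h'⟩⟩
    · omega
    · obtain rfl : n = m := by omega
      exact h'
  · intro h; exact ⟨n, Or.inr ⟨rfl, h⟩⟩

theorem sig_le {X : Set ℕ} {u : ℕ} (hu : Du u ⊆ joinCompl X) (x y : ℕ) (h : y ∈ sig u x) :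
    y ∈ chi X x := by
  have := (Part.mem_some_iff.1 (Nat.rfind_spec h)).symm
  simp only [Bool.or_eq_true, Bool.and_eq_true, decide_eq_true_eq] at this
  rw [mem_chi]
  rcases this with ⟨h1, h2⟩ | ⟨h1, h2⟩
  · exact Or.inr ⟨h1, odd_mem_joinCompl.1 (hu h2)⟩
  · exact Or.inl ⟨h1, even_mem_joinCompl.1 (hu h2)⟩

theorem exists_sig {X : Set ℕ} (L : Finset (ℕ × ℕ)) (hL : ∀ p ∈ L, p.2 ∈ chi X p.1) :
    ∃ u, Du u ⊆ joinCompl X ∧ ∀ p ∈ L, p.2 ∈ sig u p.1 := by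
  classical
  obtain ⟨u, hu⟩ := exists_code_finset
    (L.image fun p : ℕ × ℕ => if p.2 = 1 then 2 * p.1 else 2 * p.1 + 1)
  have hD : Du u ⊆ joinCompl X := by
    intro k hk
    obtain ⟨p, hp, rfl⟩ := Finset.mem_image.1 ((hu k).1 hk)
    rcases mem_chi.1 (hL p hp) with ⟨h1, h2⟩ | ⟨h1, h2⟩
    · simpa [h1] using even_mem_joinCompl.2 h2
    · simpa [h1] using odd_mem_joinCompl.2 h2
  refine ⟨u, hD, fun p hp => ?_⟩
  have hb := (hu _).2 (Finset.mem_image_of_mem _ hp)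
  rcases mem_chi.1 (hL p hp) with ⟨h1, h2⟩ | ⟨h1, h2⟩
  · have h3 : ¬ u.testBit (2 * p.1 + 1) = true := fun h =>
      odd_mem_joinCompl.1 (hD h) h2
    rw [if_pos h1] at hb
    refine Nat.mem_rfind.2 ⟨Part.mem_some_iff.2 ?_, fun {m} hm => Part.mem_some_iff.2 ?_⟩
    · simp [h1, hb]
    · obtain rfl : m = 0 := by omega
      simpa using h3
  · rw [if_neg (by omega)] at hb
    refine Nat.mem_rfind.2 ⟨Part.mem_some_iff.2 ?_, fun {m} hm => by omega⟩
    simp [h1, hb]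

theorem enum_FT {X : Set ℕ} {θ : ℕ →. ℕ} (h : RecursiveIn (chi X) θ) :
    EnumLE {t | FT θ t} (joinCompl X) := by
  obtain ⟨c, rfl⟩ := h
  obtain ⟨s, hs, hs'⟩ := smn' partrec_sig
  obtain ⟨f, hf, hf'⟩ := re_FT
  have hg : Partrec fun w : ℕ => f (w.unpair.1, compile (s w.unpair.2) c) := by
    refine hf.comp (Computable.pair (Primrec.fst.comp Primrec.unpair).to_comp ?_)
    exact (primrec_compile c).to_comp.comp (hs.comp (Primrec.snd.comp Primrec.unpair).to_comp)
  refine ⟨_, ce_of_partrec hg ∅, fun t => ?_⟩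
  have hP : Cpt (fun O => FT (evalo O c) t) :=
    Cpt.comp (Φ := fun O => evalo O c) (cpt_FT t) (cpt_evalo c)
  have e : ∀ u, Nat.pair t u ∈ {n : ℕ | (f (n.unpair.1, compile (s n.unpair.2) c)).Dom} ↔
      FT (evalo (sig u) c) t := by
    intro u
    simp only [Set.mem_ofPred_eq, Nat.unpair_pair]
    rw [← hf', eval_compile, hs']
  simp only [e]
  constructor
  · intro h
    obtain ⟨L, h1, h2⟩ := hP _ h
    obtain ⟨u, hu, hu'⟩ := exists_sig L h1
    exact ⟨u, h2 _ hu', hu⟩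
  · rintro ⟨u, h, hu⟩
    exact hP.mono (sig_le hu) h

theorem stmt17 : ∃ F : (ℕ →. ℕ) → Set ℕ,
    IsPCAEmbedding bApp gApp F ∧
    ∀ X : Set ℕ, ∃ G : Bel X → Gel (joinCompl X),
      (∀ θ : Bel X, (G θ).1 = F θ.1) ∧
      IsPCAEmbedding (bXApp X) (gXApp (joinCompl X)) G := by
  have happ : ∀ a a' : ℕ →. ℕ, {t | FT (bap a a') t} =
      {n | ∃ u, Nat.pair n u ∈ {t | FT a t} ∧ Du u ⊆ {t | FT a' t}} := by
    intro a a'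
    ext n
    exact FT_app a a' n
  refine ⟨fun θ => {t | FT θ t}, ⟨FT_inj, ?_⟩, fun X => ?_⟩
  · intro a a' c hc
    obtain rfl : c = bap a a' := Part.mem_some_iff.1 hc
    exact Part.mem_some_iff.2 (happ a a')
  · refine ⟨fun θ => ⟨{t | FT θ.1 t}, enum_FT θ.2⟩, fun θ => rfl, ?_, ?_⟩
    · intro θ θ' h
      exact Subtype.ext (FT_inj (congrArg Subtype.val h))
    · intro a a' c hc
      obtain ⟨b, hb, hc⟩ := Part.mem_bind_iff.1 hc
      obtain ⟨hb', hc⟩ := Part.mem_assert_iff.1 hc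
      obtain rfl := Part.mem_some_iff.1 hc
      obtain rfl : b = bap a.1 a'.1 := Part.mem_some_iff.1 hb
      refine Part.mem_bind_iff.2 ⟨{t | FT (bap a.1 a'.1) t}, Part.mem_some_iff.2 (happ _ _), ?_⟩
      exact Part.mem_assert_iff.2 ⟨enum_FT hb', Part.mem_some_iff.2 rfl⟩

end PCAEmb
end
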